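/- arXiv:1812.09772 — 11 statements merged into one kernel-verified Lean document; each statement's English description precedes it below -/
import Mathlib

section
/- Let n ≥ 1 and let G be a group acting on ℝⁿ by homeomorphisms, such that the action is free (g • x = x for some x ∈ ℝⁿ implies g = 1) and properly discontinuous (for all compact sets K, L ⊆ ℝⁿ, the set {g ∈ G : (g • K) ∩ L ≠ ∅} is finite). If H is a subgroup of G such that the orbit space ℝⁿ/H, equipped with the quotient topology, is compact, then H has finite index in G. -/
/-- for a free and properly discontinuous action of a group `G` on ℝⁿ by
homeomorphisms, any subgroup `H` with compact orbit space ℝⁿ/H has finite index in `G`. -/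
theorem stmt_2 (n : ℕ) (hn : 1 ≤ n) (G : Type) [Group G] [MulAction G (Fin n → ℝ)]
    (hcont : ∀ g : G, Continuous fun x : Fin n → ℝ => g • x)
    (hfree : ∀ (g : G) (x : Fin n → ℝ), g • x = x → g = 1)
    (hpd : ∀ K L : Set (Fin n → ℝ), IsCompact K → IsCompact L →
      {g : G | ((fun x => g • x) '' K ∩ L).Nonempty}.Finite)
    (H : Subgroup G)
    (hcomp : CompactSpace (Quotient (MulAction.orbitRel H (Fin n → ℝ)))) :
    H.FiniteIndex := by
  let p : (Fin n → ℝ) → Quotient (MulAction.orbitRel H (Fin n → ℝ)) := Quotient.mk _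
  have hopen : IsOpenMap p := by
    intro U hU
    have hpre : p ⁻¹' (p '' U) = ⋃ h : H, (fun x : Fin n → ℝ => (h : G) • x) ⁻¹' U := by
      ext x
      simp only [Set.mem_preimage, Set.mem_image, Set.mem_iUnion]
      constructor
      · rintro ⟨y, hy, hxy⟩
        obtain ⟨h, hh⟩ := MulAction.orbitRel_apply.1 (Quotient.exact hxy)
        refine ⟨h, ?_⟩
        have hh' : (h : G) • x = y := hh
        rw [hh']; exact hy
      · rintro ⟨h, hh⟩
        exact ⟨_, hh, Quotient.sound (MulAction.orbitRel_apply.2 ⟨h, rfl⟩)⟩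
    change IsOpen (p ⁻¹' (p '' U))
    rw [hpre]
    exact isOpen_iUnion fun h => hU.preimage (hcont h)
  obtain ⟨t, ht⟩ := isCompact_univ.elim_finite_subcover
    (fun k : ℕ => p '' Metric.ball (0 : Fin n → ℝ) k)
    (fun k => hopen _ Metric.isOpen_ball) (by
      intro q _
      induction q using Quotient.inductionOn with
      | h x =>
        obtain ⟨k, hk⟩ := exists_nat_gt (dist x 0)
        exact Set.mem_iUnion.2 ⟨k, x, hk, rfl⟩)
  have hK : IsCompact (⋃ k ∈ t, Metric.closedBall (0 : Fin n → ℝ) (k : ℕ)) :=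
    t.isCompact_biUnion fun k _ => isCompact_closedBall _ _
  have hF := hpd {0} _ isCompact_singleton hK
  have hfin : Finite (G ⧸ H) := by
    refine Set.finite_univ_iff.1 ((hF.image (fun g => ((g⁻¹ : G) : G ⧸ H))).subset ?_)
    intro q _
    induction q using QuotientGroup.induction_on with
    | H g =>
      have hq := ht (Set.mem_univ (p (g⁻¹ • (0 : Fin n → ℝ))))
      simp only [Set.mem_iUnion] at hq
      obtain ⟨k, hk, y, hy, hxy⟩ := hq
      obtain ⟨h, hh⟩ := MulAction.orbitRel_apply.1 (Quotient.exact hxy)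
      have hh' : (h : G) • g⁻¹ • (0 : Fin n → ℝ) = y := hh
      refine ⟨(h : G) * g⁻¹, ⟨y, ⟨0, rfl, ?_⟩, ?_⟩, ?_⟩
      · change ((h : G) * g⁻¹) • (0 : Fin n → ℝ) = y
        rw [mul_smul, hh']
      · exact Set.mem_biUnion hk (Metric.ball_subset_closedBall hy)
      · refine QuotientGroup.eq.2 ?_
        simp
  exact Subgroup.finiteIndex_of_finite_quotient
end

section
/- Let g be the affine transformation of ℝ³ given by x ↦ A x + v, where A ∈ GL₃(ℤ), the characteristic polynomial of A is (t−1)³ (i.e., all eigenvalues of A equal 1), and v ∈ ℝ³. Then there exist P ∈ GL₃(ℤ) and c ∈ ℝ³ such that, letting h be the affine map x ↦ P x + c, the conjugate h ∘ g ∘ h⁻¹ is an affine map x ↦ A' x + v' of one of the following three forms: (i) A' = [[1,a,b],[0,1,c₀],[0,0,1]] with a, b, c₀ ∈ ℤ, a ≠ 0, c₀ ≠ 0, and v' = (0,0,z) for some z ∈ ℝ; (ii) A' = [[1,0,b],[0,1,0],[0,0,1]] with b ∈ ℤ, b ≠ 0, and v' = (0,y,z) for some y, z ∈ ℝ; (iii)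 A' is the identity matrix and v' ∈ ℝ³ is arbitrary. -/
abbrev M3 := Matrix (Fin 3) (Fin 3) ℤ

/-- two-variable Euclid: clears the second entry -/
lemma gcd_red (x y : ℤ) : ∃ p q r s : ℤ, p * s - q * r = 1 ∧ r * x + s * y = 0 := by
  by_cases h : (Int.gcd x y : ℤ) = 0
  · have h' : Int.gcd x y = 0 := by exact_mod_cast h
    rw [Int.gcd_eq_zero_iff] at h'
    exact ⟨1, 0, 0, 1, by simp, by simp [h'.1, h'.2]⟩
  · obtain ⟨k, hk⟩ := Int.gcd_dvd_left x y
    obtain ⟨l, hl⟩ := Int.gcd_dvd_right x y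
    have hb := Int.gcd_eq_gcd_ab x y
    refine ⟨Int.gcdA x y, Int.gcdB x y, -l, k, ?_, ?_⟩
    · apply mul_left_cancel₀ h
      linear_combination (-1) * hb - Int.gcdA x y * hk - Int.gcdB x y * hl
    · linear_combination (-l) * hk + k * hl

/-- block acting on the first two coordinates -/
def blkA (p q r s : ℤ) (h : p * s - q * r = 1) : M3ˣ where
  val := !![p, q, 0; r, s, 0; 0, 0, 1]
  inv := !![s, -q, 0; -r, p, 0; 0, 0, 1]
  val_inv := by
    ext i j; fin_cases i <;> fin_cases j <;> simp [Matrix.mul_apply, Fin.sum_univ_three] <;> linarith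
  inv_val := by
    ext i j; fin_cases i <;> fin_cases j <;> simp [Matrix.mul_apply, Fin.sum_univ_three] <;> linarith

/-- block acting on the last two coordinates -/
def blkB (p q r s : ℤ) (h : p * s - q * r = 1) : M3ˣ where
  val := !![1, 0, 0; 0, p, q; 0, r, s]
  inv := !![1, 0, 0; 0, s, -q; 0, -r, p]
  val_inv := by
    ext i j; fin_cases i <;> fin_cases j <;> simp [Matrix.mul_apply, Fin.sum_univ_three] <;> linarith
  inv_val := by
    ext i j; fin_cases i <;> fin_cases j <;> simp [Matrix.mul_apply, Fin.sum_univ_three] <;> linarith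

lemma conj_mk (u : M3ˣ) (N : M3) : IsConj N ((u : M3) * N * (u⁻¹ : M3ˣ)) :=
  ⟨u, by simp [SemiconjBy, mul_assoc]⟩

lemma row_red (w : Fin 3 → ℤ) : ∃ R : M3ˣ,
    Matrix.vecMul w (R : M3) 0 = 0 ∧ Matrix.vecMul w (R : M3) 1 = 0 := by
  obtain ⟨p, q, r, s, h, e⟩ := gcd_red (w 0) (w 1)
  obtain ⟨p', q', r', s', h', e'⟩ := gcd_red (-(p * w 0 + q * w 1)) (w 2)
  refine ⟨blkA r (-p) s (-q) (by linarith) * blkB r' (-p') s' (-q') (by linarith), ?_, ?_⟩ <;>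
  simp [blkA, blkB, Matrix.vecMul, dotProduct, Matrix.mul_apply, Fin.sum_univ_three]
  · linarith
  · linarith

lemma step1 (N : M3) (hN : N ^ 3 = 0) : ∃ N' : M3, IsConj N N' ∧ N' 2 = 0 := by
  have hd : N.det = 0 := by
    have := congrArg Matrix.det hN
    simpa [Matrix.det_pow] using this
  obtain ⟨w, hw, hwN⟩ := Matrix.exists_vecMul_eq_zero_iff.2 hd
  obtain ⟨R, h0, h1⟩ := row_red w
  refine ⟨_, conj_mk R⁻¹ N, ?_⟩
  set y := Matrix.vecMul w (R : M3) with hy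
  have hyw : Matrix.vecMul y ((R⁻¹ : M3ˣ) : M3) = w := by
    rw [hy, Matrix.vecMul_vecMul]; simp
  have hy2 : y 2 ≠ 0 := by
    intro h2
    have : y = 0 := by ext i; fin_cases i <;> assumption
    apply hw; rw [← hyw, this]; simp
  set N' := ((R⁻¹ : M3ˣ) : M3) * N * ((R⁻¹)⁻¹ : M3ˣ) with hN'
  have hz : Matrix.vecMul y N' = 0 := by
    rw [hN', ← Matrix.vecMul_vecMul, ← Matrix.vecMul_vecMul, hyw, hwN]; simp
  ext j
  have := congrFun hz j
  simp [Matrix.vecMul, dotProduct, Fin.sum_univ_three, h0, h1, hy2] at this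
  simpa using this

lemma conj_cube {N N' : M3} (h : IsConj N N') (hN : N ^ 3 = 0) : N' ^ 3 = 0 := by
  obtain ⟨u, hu⟩ := h
  have h3 := (hu.pow_right 3)
  rw [hN] at h3
  have : N' ^ 3 * (u : M3) = 0 := by simpa [SemiconjBy] using h3.symm
  simpa using this

lemma step2 (N : M3) (hN : N ^ 3 = 0) (h2 : N 2 = 0) :
    ∃ a b c : ℤ, IsConj N !![0, a, b; 0, 0, c; 0, 0, 0] := by
  obtain ⟨a, b, c, d, e, f, rfl⟩ : ∃ a b c d e f : ℤ, N = !![a, b, c; d, e, f; 0, 0, 0] := by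
    refine ⟨N 0 0, N 0 1, N 0 2, N 1 0, N 1 1, N 1 2, ?_⟩
    ext i j; fin_cases i <;> fin_cases j <;> simp [h2]
  have hM : (!![a, b; d, e] : Matrix (Fin 2) (Fin 2) ℤ) ^ 3 = 0 := by
    have e00 := congrFun (congrFun hN 0) 0
    have e01 := congrFun (congrFun hN 0) 1
    have e10 := congrFun (congrFun hN 1) 0
    have e11 := congrFun (congrFun hN 1) 1
    simp [pow_succ, Matrix.mul_apply, Fin.sum_univ_three] at e00 e01 e10 e11
    ext i j; fin_cases i <;> fin_cases j <;>
      simp [pow_succ, Matrix.mul_apply, Fin.sum_univ_two] <;> assumption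
  have hd : (!![a, b; d, e] : Matrix (Fin 2) (Fin 2) ℤ).det = 0 := by
    have := congrArg Matrix.det hM
    rw [Matrix.det_pow] at this
    simpa using this
  obtain ⟨w, hw, hwN⟩ := Matrix.exists_vecMul_eq_zero_iff.2 hd
  obtain ⟨p, q, r, s, h, eq⟩ := gcd_red (w 0) (w 1)
  set g := p * w 0 + q * w 1 with hg
  have w0 : w 0 = s * g := by rw [hg]; linear_combination (-w 0) * h - q * eq
  have w1 : w 1 = -r * g := by rw [hg]; linear_combination (-w 1) * h + p * eq
  have g0 : g ≠ 0 := by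
    intro g0
    apply hw
    ext i; fin_cases i <;> simp [w0, w1, g0]
  have k0 := congrFun hwN 0
  have k1 := congrFun hwN 1
  simp [Matrix.vecMul, dotProduct, Fin.sum_univ_two, w0, w1] at k0 k1
  have k0' : s * a - r * d = 0 := by
    apply mul_left_cancel₀ g0; linear_combination k0
  have k1' : s * b - r * e = 0 := by
    apply mul_left_cancel₀ g0; linear_combination k1
  have hdet : q * (-r) - (-p) * s = 1 := by linarith
  have hc := conj_mk (blkA q (-p) s (-r) (by linarith)) !![a, b, c; d, e, f; 0, 0, 0]
  have hm : ((blkA q (-p) s (-r) (by linarith) : M3ˣ) : M3) * !![a, b, c; d, e, f; 0, 0, 0] *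
     ((blkA q (-p) s (-r) (by linarith))⁻¹ : M3ˣ) =
     !![(q*a-p*d)*(-r) + (q*b-p*e)*(-s), (q*a-p*d)*p + (q*b-p*e)*q, q*c-p*f; 0, 0, s*c-r*f; 0,0,0] := by
    rw [← Units.inv_eq_val_inv]
    ext i j; fin_cases i <;> fin_cases j <;>
      simp [blkA, Matrix.mul_apply, Fin.sum_univ_three]
    · ring
    · ring
    · ring
    · linear_combination (-r) * k0' - s * k1'
    · linear_combination p * k0' + q * k1'
    · ring
  rw [hm] at hc
  have h3 := conj_cube hc hN
  have e00 := congrFun (congrFun h3 0) 0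
  simp [pow_succ, Matrix.mul_apply, Fin.sum_univ_three] at e00
  generalize (q*a-p*d)*p + (q*b-p*e)*q = α at *
  have hz : (q*a-p*d)*(-r) + (q*b-p*e)*(-s) = 0 := by
    linarith
  rw [hz] at hc
  exact ⟨_, _, _, hc⟩

lemma step3 (a b c : ℤ) : (a ≠ 0 ∧ c ≠ 0) ∨
    ∃ g : ℤ, IsConj (!![0, a, b; 0, 0, c; 0, 0, 0] : M3) !![0, 0, g; 0, 0, 0; 0, 0, 0] := by
  by_cases ha : a = 0
  · right
    obtain ⟨p, q, r, s, h, eq⟩ := gcd_red b c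
    refine ⟨p * b + q * c, blkA p q r s h, ?_⟩
    subst ha
    ext i j; fin_cases i <;> fin_cases j <;>
      simp [blkA, Matrix.mul_apply, Fin.sum_univ_three]
    exact eq
  by_cases hc : c = 0
  · right
    obtain ⟨p, q, r, s, h, eq⟩ := gcd_red a b
    refine ⟨p * a + q * b, blkB q (-p) s (-r) (by linarith), ?_⟩
    subst hc
    ext i j; fin_cases i <;> fin_cases j <;>
      simp [blkB, Matrix.mul_apply, Fin.sum_univ_three]
    · linear_combination (-a) * h - q * eq
    · linear_combination (-b) * h + p * eq
  · exact Or.inl ⟨ha, hc⟩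

lemma affine_conj (A N' : M3) (u : M3ˣ) (h : (u : M3) * (A - 1) = N' * u)
    (v c v' : Fin 3 → ℝ)
    (hv : ((u : M3).map (Int.cast : ℤ → ℝ)).mulVec v =
      (N'.map (Int.cast : ℤ → ℝ)).mulVec c + v') (x : Fin 3 → ℝ) :
    ((u : M3).map (Int.cast : ℤ → ℝ)).mulVec ((A.map (Int.cast : ℤ → ℝ)).mulVec x + v) + c =
    ((1 + N').map (Int.cast : ℤ → ℝ)).mulVec
      (((u : M3).map (Int.cast : ℤ → ℝ)).mulVec x + c) + v' := by
  have h1 : (u : M3) * A = (1 + N') * u := by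
    rw [add_mul, ← h, mul_sub]; simp
  have h2 : (u : M3).map (Int.cast : ℤ → ℝ) * A.map (Int.cast : ℤ → ℝ) =
      (1 + N').map (Int.cast : ℤ → ℝ) * (u : M3).map (Int.cast : ℤ → ℝ) := by
    have := congrArg (fun M : M3 => M.map (Int.castRingHom ℝ)) h1
    simp only [Matrix.map_mul] at this
    exact this
  have h3 : (1 + N').map (Int.cast : ℤ → ℝ) = 1 + N'.map (Int.cast : ℤ → ℝ) := by
    rw [Matrix.map_add _ (by intros; push_cast; rfl)]; simp
  rw [Matrix.mulVec_add, Matrix.mulVec_mulVec, h2, hv, Matrix.mulVec_add,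
    ← Matrix.mulVec_mulVec]
  conv_rhs => rw [h3, Matrix.add_mulVec _ _ c, ← h3]
  rw [Matrix.one_mulVec]
  abel


/-- an affine transformation `x ↦ A x + v` of ℝ³ with `A ∈ GL₃(ℤ)` unipotent
(characteristic polynomial `(t-1)³`) is conjugate, by an affine map `x ↦ P x + c` with
`P ∈ GL₃(ℤ)`, to an affine map `x ↦ A' x + v'` of one of three normal forms. -/
theorem stmt_3 (A : Matrix (Fin 3) (Fin 3) ℤ) (hA : IsUnit A)
    (hchar : A.charpoly = (Polynomial.X - 1) ^ 3) (v : Fin 3 → ℝ) :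
    ∃ P : Matrix (Fin 3) (Fin 3) ℤ, IsUnit P ∧ ∃ c : Fin 3 → ℝ,
      ∃ (A' : Matrix (Fin 3) (Fin 3) ℤ) (v' : Fin 3 → ℝ),
        (∀ x : Fin 3 → ℝ,
            (P.map (Int.cast : ℤ → ℝ)).mulVec ((A.map (Int.cast : ℤ → ℝ)).mulVec x + v) + c =
            (A'.map (Int.cast : ℤ → ℝ)).mulVec ((P.map (Int.cast : ℤ → ℝ)).mulVec x + c) + v') ∧
        ((∃ a b c₀ : ℤ, a ≠ 0 ∧ c₀ ≠ 0 ∧ A' = !![1, a, b; 0, 1, c₀; 0, 0, 1] ∧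
            ∃ z : ℝ, v' = ![0, 0, z]) ∨
         (∃ b : ℤ, b ≠ 0 ∧ A' = !![1, 0, b; 0, 1, 0; 0, 0, 1] ∧
            ∃ y z : ℝ, v' = ![0, y, z]) ∨
         A' = 1) := by
  have hN : (A - 1) ^ 3 = 0 := by
    have := Matrix.aeval_self_charpoly A
    rw [hchar] at this
    simpa using this
  obtain ⟨N₁, hc1, hr⟩ := step1 _ hN
  obtain ⟨a, b, k, hc2⟩ := step2 N₁ (conj_cube hc1 hN) hr
  have hc := hc1.trans hc2
  rcases step3 a b k with ⟨ha, hk⟩ | ⟨g, hg⟩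
  · obtain ⟨u, hu⟩ := hc
    set y := ((u : M3).map (Int.cast : ℤ → ℝ)).mulVec v with hy
    have ha' : (a : ℝ) ≠ 0 := by exact_mod_cast ha
    have hk' : (k : ℝ) ≠ 0 := by exact_mod_cast hk
    refine ⟨u, u.isUnit, ![0, (y 0 - b * (y 1 / k)) / a, y 1 / k], _, ![0, 0, y 2],
      affine_conj A _ u hu v _ _ ?_, Or.inl ⟨a, b, k, ha, hk, ?_, _, rfl⟩⟩
    · rw [← hy]
      ext i; fin_cases i <;> simp [Matrix.mulVec, dotProduct, Fin.sum_univ_three] <;> field_simp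
      ring
    · ext i j; fin_cases i <;> fin_cases j <;> simp
  · obtain ⟨u, hu⟩ := hc.trans hg
    set y := ((u : M3).map (Int.cast : ℤ → ℝ)).mulVec v with hy
    by_cases g0 : g = 0
    · refine ⟨u, u.isUnit, 0, _, y, affine_conj A _ u hu v _ _ ?_, Or.inr (Or.inr ?_)⟩
      · simp [hy]
      · ext i j; fin_cases i <;> fin_cases j <;> simp [g0]
    · have hg' : (g : ℝ) ≠ 0 := by exact_mod_cast g0
      refine ⟨u, u.isUnit, ![0, 0, y 0 / g], _, ![0, y 1, y 2],
        affine_conj A _ u hu v _ _ ?_, Or.inr (Or.inl ⟨g, g0, ?_, _, _, rfl⟩)⟩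
      · rw [← hy]
        ext i; fin_cases i <;> simp [Matrix.mulVec, dotProduct, Fin.sum_univ_three]
        field_simp
      · ext i j; fin_cases i <;> fin_cases j <;> simp
end

section
/- Let A ∈ SL₂(ℤ) have both eigenvalues equal to 1 (equivalently, trace A = 2). Then there exists C ∈ GL₂(ℤ) such that C A C⁻¹ = [[1,m],[0,1]] for some integer m ≥ 0; this m is uniquely determined by A (if C' ∈ GL₂(ℤ) and m' ≥ 0 satisfy C' A C'⁻¹ = [[1,m'],[0,1]], then m' = m) and equals the greatest common divisor of the four entries of the matrix A − I (so m = 0 exactly when A = I). -/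
/-- The parameter of a conjugating matrix is the gcd of the entries of `A - 1`. -/
theorem aux_gcd (A C : Matrix (Fin 2) (Fin 2) ℤ) (m : ℤ) (hC : IsUnit C) (hm : 0 ≤ m)
    (h : C * A = !![1, m; 0, 1] * C) :
    m = Finset.univ.gcd (fun p : Fin 2 × Fin 2 => (A - 1) p.1 p.2) := by
  rw [Matrix.isUnit_iff_isUnit_det, Matrix.det_fin_two] at hC
  obtain ⟨u, hu⟩ := hC.exists_right_inv
  have h00 := congrFun (congrFun h 0) 0
  have h01 := congrFun (congrFun h 0) 1
  have h10 := congrFun (congrFun h 1) 0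
  have h11 := congrFun (congrFun h 1) 1
  simp [Matrix.mul_apply, Fin.sum_univ_two] at h00 h01 h10 h11
  set p := C 0 0
  set q := C 0 1
  set r := C 1 0
  set s := C 1 1
  have e00 : A 0 0 - 1 = m * (u * s * r) := by
    linear_combination u * s * h00 - u * q * h10 - (A 0 0 - 1) * hu
  have e01 : A 0 1 = m * (u * s * s) := by
    linear_combination u * s * h01 - u * q * h11 - (A 0 1) * hu
  have e10 : A 1 0 = m * (-u * r * r) := by
    linear_combination -u * r * h00 + u * p * h10 - (A 1 0) * hu
  have e11 : A 1 1 - 1 = m * (-u * r * s) := by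
    linear_combination -u * r * h01 + u * p * h11 - (A 1 1 - 1) * hu
  have hcop : IsCoprime (s * s) (r * r) := by
    have : IsCoprime s r := ⟨u * p, -u * q, by linear_combination hu⟩
    exact (this.mul_left this).mul_right (this.mul_left this)
  obtain ⟨α, β, hab⟩ := hcop
  have huu : u * (p * s - q * r) = 1 := by linear_combination hu
  apply Int.dvd_antisymm hm
  · exact Int.nonneg_of_normalize_eq_self Finset.normalize_gcd
  · apply Finset.dvd_gcd
    rintro ⟨i, j⟩ -
    fin_cases i <;> fin_cases j <;> simp
    · exact ⟨_, e00⟩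
    · exact ⟨_, e01⟩
    · exact ⟨_, e10⟩
    · exact ⟨_, e11⟩
  · have d01 := Finset.gcd_dvd (f := fun p : Fin 2 × Fin 2 => (A - 1) p.1 p.2)
      (Finset.mem_univ (0, 1))
    have d10 := Finset.gcd_dvd (f := fun p : Fin 2 × Fin 2 => (A - 1) p.1 p.2)
      (Finset.mem_univ (1, 0))
    generalize Finset.gcd (α := ℤ) Finset.univ
      (fun p : Fin 2 × Fin 2 => (A - 1) p.1 p.2) = g at d01 d10 ⊢
    have d01' : g ∣ m * (u * s * s) := by simpa [e01] using d01
    have d10' : g ∣ m * (-u * r * r) := by simpa [e10] using d10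
    have : (p * s - q * r) * (α * (m * (u * s * s)) - β * (m * (-u * r * r))) = m := by
      linear_combination m * hab + m * (α * (s * s) + β * (r * r)) * huu
    rw [← this]
    exact Dvd.dvd.mul_left (dvd_sub (Dvd.dvd.mul_left d01' _) (Dvd.dvd.mul_left d10' _)) _

/-- any `A ∈ SL₂(ℤ)` with trace 2 is conjugate in `GL₂(ℤ)` to `[[1,m],[0,1]]` with
`m ≥ 0`; this `m` is unique and equals the gcd of the entries of `A - I`. -/
theorem stmt_4 (A : Matrix (Fin 2) (Fin 2) ℤ) (hdet : A.det = 1) (htr : A.trace = 2) :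
    ∃ (C : Matrix (Fin 2) (Fin 2) ℤ) (m : ℤ), IsUnit C ∧ 0 ≤ m ∧
      C * A = !![1, m; 0, 1] * C ∧
      (∀ (C' : Matrix (Fin 2) (Fin 2) ℤ) (m' : ℤ), IsUnit C' → 0 ≤ m' →
        C' * A = !![1, m'; 0, 1] * C' → m' = m) ∧
      m = Finset.univ.gcd (fun p : Fin 2 × Fin 2 => (A - 1) p.1 p.2) := by
  suffices H : ∃ (C : Matrix (Fin 2) (Fin 2) ℤ) (m : ℤ), IsUnit C ∧ 0 ≤ m ∧
      C * A = !![1, m; 0, 1] * C by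
    obtain ⟨C, m, hC, hm, h⟩ := H
    have hg := aux_gcd A C m hC hm h
    exact ⟨C, m, hC, hm, h, fun C' m' hC' hm' h' => (aux_gcd A C' m' hC' hm' h').trans hg.symm, hg⟩
  rw [Matrix.det_fin_two] at hdet
  rw [Matrix.trace_fin_two] at htr
  obtain ⟨x, hx⟩ : ∃ x, x = A 0 0 - 1 := ⟨_, rfl⟩
  have a00 : A 0 0 = 1 + x := by linarith
  have a11 : A 1 1 = 1 - x := by linarith
  rw [a00, a11] at hdet
  have hker : ∃ r s : ℤ, IsCoprime r s ∧ r * x + s * A 1 0 = 0 ∧ r * A 0 1 - s * x = 0 := by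
    by_cases h0 : x = 0 ∧ A 1 0 = 0
    · exact ⟨0, 1, isCoprime_one_right, by simp [h0.1, h0.2], by simp [h0.1]⟩
    · have hpos : 0 < Int.gcd x (A 1 0) := by
        rw [Int.gcd_pos_iff]; tauto
      obtain ⟨x', c', hco, hx', hc'⟩ := Int.exists_gcd_one hpos
      have hg : (Int.gcd x (A 1 0) : ℤ) ≠ 0 := by positivity
      generalize (Int.gcd x (A 1 0) : ℤ) = g at *
      refine ⟨-c', x', ?_, ?_, ?_⟩
      · exact (Int.isCoprime_iff_gcd_eq_one.mpr hco).symm.neg_left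
      · rw [hc', hx']; ring
      · apply mul_right_cancel₀ hg
        linear_combination hdet + x * hx' + A 0 1 * hc'
  obtain ⟨r, s, ⟨a, b, hab⟩, k1, k2⟩ := hker
  have key : ∀ e m : ℤ, e * e = 1 →
      m = e * (b * (b * A 0 1 + a * x) + a * (b * x - a * A 1 0)) →
      IsUnit !![b, -a; e * r, e * s] ∧
      !![b, -a; e * r, e * s] * A = !![1, m; 0, 1] * !![b, -a; e * r, e * s] := by
    intro e m he hm
    constructor
    · rw [Matrix.isUnit_iff_isUnit_det, Matrix.det_fin_two]
      refine IsUnit.of_mul_eq_one e ?_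
      simp
      linear_combination e * e * hab + he
    · ext i j
      fin_cases i <;> fin_cases j <;>
        simp [Matrix.mul_apply, Fin.sum_univ_two, a00, a11, hm]
      · linear_combination -b ^ 2 * k2 - a * b * k1 - (b * x - a * A 1 0) * hab
          - (b * (b * A 0 1 + a * x) + a * (b * x - a * A 1 0)) * r * he
      · linear_combination a * b * k2 + a ^ 2 * k1 - (b * A 0 1 + a * x) * hab
          - (b * (b * A 0 1 + a * x) + a * (b * x - a * A 1 0)) * s * he
      · linear_combination e * k1
      · linear_combination e * k2
  rcases le_total 0 (b * (b * A 0 1 + a * x) + a * (b * x - a * A 1 0)) with h | h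
  · obtain ⟨h1, h2⟩ := key 1 _ (by norm_num) rfl
    exact ⟨_, _, h1, by linarith, h2⟩
  · obtain ⟨h1, h2⟩ := key (-1) _ (by norm_num) rfl
    exact ⟨_, _, h1, by linarith, h2⟩
end

section
/- Let a₁, b₂, c₁ be nonzero integers, b₁ ∈ ℤ, z₁, x₂, y₂, z₂, x₃ ∈ ℝ with x₃ ≠ 0, and let Γ be the group of affine transformations of ℝ³ generated by g = ([[1,a₁,b₁],[0,1,c₁],[0,0,1]], (0,0,z₁)), h = ([[1,0,b₂],[0,1,0],[0,0,1]], (x₂,y₂,z₂)) and the pure translation t = (I, (x₃,0,0)). Assume that the translation subgroup of Γ has rank 1, i.e., the vector part of every pure translation belonging to Γ is a real multiple of (x₃,0,0). Then Γ acts freely and properly discontinuously on ℝ³ if and only if z₂ = 0, z₁·y₂·x₃ ≠ 0 and (a₁·y₂ − b₂·z₁)/x₃ ∈ ℚ; in that case the orbit space ℝ³/Γ is compact. -/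
open Matrix

noncomputable section

/-- ℝ³ as the space of triples of reals. -/
abbrev E3 : Type := Fin 3 → ℝ

/-- The group of invertible affine transformations of ℝ³. -/
abbrev AffT : Type := E3 ≃ᵃ[ℝ] E3

/-- `γ` is the affine transformation `x ↦ A x + v` with linear part `A` and vector part `v`. -/
def HasForm (γ : AffT) (A : Matrix (Fin 3) (Fin 3) ℝ) (v : E3) : Prop :=
  ∀ x, γ x = A.mulVec x + v

/-- `γ` is the pure translation by the vector `v`. -/
def IsTranslationBy (γ : AffT) (v : E3) : Prop :=
  ∀ x, γ x = x + v

/-- The group `Γ` acts freely on ℝ³. -/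
def IsFreeAction (Γ : Subgroup AffT) : Prop :=
  ∀ γ ∈ Γ, (∃ x : E3, γ x = x) → γ = 1

/-- The group `Γ` acts properly discontinuously on ℝ³. -/
def IsProperlyDiscontinuous (Γ : Subgroup AffT) : Prop :=
  ∀ K L : Set E3, IsCompact K → IsCompact L →
    {γ : AffT | γ ∈ Γ ∧ ((γ '' K) ∩ L).Nonempty}.Finite

/-- The orbit equivalence relation of `Γ` on ℝ³. -/
def orbitSetoid (Γ : Subgroup AffT) : Setoid E3 where
  r x y := ∃ γ ∈ Γ, γ x = y
  iseqv := by
    constructor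
    · intro x; exact ⟨1, Γ.one_mem, rfl⟩
    · rintro x y ⟨γ, hγ, h⟩
      exact ⟨γ⁻¹, Γ.inv_mem hγ, by rw [← h]; exact γ.symm_apply_apply x⟩
    · rintro x y z ⟨γ, hγ, h⟩ ⟨δ, hδ, h'⟩
      exact ⟨δ * γ, Γ.mul_mem hδ hγ, by simp [← h', ← h]⟩

/-- The orbit space `ℝ³/Γ`, equipped with the quotient topology, is compact. -/
def HasCompactQuotient (Γ : Subgroup AffT) : Prop :=
  CompactSpace (Quotient (orbitSetoid Γ))


/-- If `f` shifts the `i`-th coordinate by `c`, then `f ^ n` shifts it by `n c`. -/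
theorem zpow_coord (f : AffT) (i : Fin 3) (c : ℝ) (hf : ∀ p, f p i = p i + c) (n : ℤ) :
    ∀ p, (f ^ n) p i = p i + n * c := by
  have hinv : ∀ p, (f⁻¹) p i = p i - c := by
    intro p
    have h1 := hf (f⁻¹ p)
    have h2 : f (f⁻¹ p) = p := f.apply_symm_apply p
    rw [h2] at h1
    linarith
  induction n using Int.induction_on with
  | zero => intro p; simp
  | succ n ih =>
    intro p
    rw [_root_.zpow_add_one, AffineEquiv.mul_def, AffineEquiv.trans_apply, ih, hf]
    push_cast; ring
  | pred n ih =>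
    intro p
    rw [_root_.zpow_sub_one, AffineEquiv.mul_def, AffineEquiv.trans_apply, ih, hinv]
    push_cast; ring

/-- Normal form of elements in a group of Heisenberg type. -/
theorem normal_form {G : Type*} [Group G] (g h τ : G) (j l : ℤ)
    (c1 : Commute τ g) (c2 : Commute τ h) (hgh : g * h = τ ^ j * (h * g)) :
    ∀ γ ∈ Subgroup.closure {g, h, τ ^ l}, ∃ k n m : ℤ, γ = τ ^ k * (h ^ n * g ^ m) := by
  have e1 : g * h * g⁻¹ = τ ^ j * h := by rw [hgh]; group
  have e2 : g⁻¹ * h * g⁻¹⁻¹ = τ ^ (-j) * h := by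
    have h1 : h = τ ^ (-j) * (g * h * g⁻¹) := by rw [e1]; group
    have h2 : g⁻¹ * τ ^ (-j) = τ ^ (-j) * g⁻¹ := ((c1.zpow_left (-j)).inv_right).eq.symm
    calc g⁻¹ * h * g⁻¹⁻¹ = g⁻¹ * (τ ^ (-j) * (g * h * g⁻¹)) * g⁻¹⁻¹ := by rw [← h1]
      _ = (g⁻¹ * τ ^ (-j)) * g * h := by group
      _ = τ ^ (-j) * h := by rw [h2]; group
  have key : ∀ (u : G) (i : ℤ), u * h * u⁻¹ = τ ^ i * h → ∀ n : ℤ,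
      u * h ^ n = τ ^ (i * n) * (h ^ n * u) := by
    intro u i hu n
    have h1 : u * h ^ n * u⁻¹ = τ ^ (i * n) * h ^ n := by
      rw [← conj_zpow, hu, (c2.zpow_left i).mul_zpow, _root_.zpow_mul]
    rw [← mul_assoc, ← h1]; group
  have step : ∀ (u : G) (i e : ℤ), Commute τ u → u = g ^ e → u * h * u⁻¹ = τ ^ i * h →
      ∀ k n m : ℤ, u * (τ ^ k * (h ^ n * g ^ m)) =
        τ ^ (k + i * n) * (h ^ n * g ^ (e + m)) := by
    intro u i e cu hu hi k n m
    have h1 : u * τ ^ k = τ ^ k * u := (cu.zpow_left k).eq.symm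
    calc u * (τ ^ k * (h ^ n * g ^ m)) = (u * τ ^ k) * h ^ n * g ^ m := by group
      _ = τ ^ k * (u * h ^ n) * g ^ m := by rw [h1]; group
      _ = τ ^ k * τ ^ (i * n) * (h ^ n * (u * g ^ m)) := by rw [key u i hi]; group
      _ = _ := by rw [hu, ← _root_.zpow_add, ← _root_.zpow_add]
  have steph : ∀ e k n m : ℤ, h ^ e * (τ ^ k * (h ^ n * g ^ m)) =
      τ ^ k * (h ^ (e + n) * g ^ m) := by
    intro e k n m
    have h1 : h ^ e * τ ^ k = τ ^ k * h ^ e := ((c2.zpow_left k).zpow_right e).eq.symm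
    rw [← mul_assoc, h1, _root_.zpow_add]; group
  intro γ hγ
  induction hγ using Subgroup.closure_induction_left with
  | one => exact ⟨0, 0, 0, by simp⟩
  | mul_left x hx y hy ih =>
    obtain ⟨k, n, m, rfl⟩ := ih
    rcases hx with rfl | rfl | rfl
    · exact ⟨_, _, _, step x j 1 c1 (by simp) e1 k n m⟩
    · have := steph 1 k n m
      rw [_root_.zpow_one] at this
      exact ⟨_, _, _, this⟩
    · exact ⟨l + k, n, m, by rw [_root_.zpow_add, mul_assoc]⟩
  | inv_mul_cancel x hx y hy ih =>
    obtain ⟨k, n, m, rfl⟩ := ih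
    rcases hx with rfl | rfl | rfl
    · exact ⟨_, _, _, step x⁻¹ (-j) (-1) c1.inv_right (by simp) e2 k n m⟩
    · have := steph (-1) k n m
      rw [_root_.zpow_neg_one] at this
      exact ⟨_, _, _, this⟩
    · exact ⟨-l + k, n, m, by rw [_root_.zpow_add, _root_.zpow_neg, mul_assoc]⟩

/-- Only finitely many members of a family shifting a coordinate by `m c` can move
`K` to meet `L`. -/
theorem finite_shift (K L : Set E3) (hK : IsCompact K) (hL : IsCompact L) (i : Fin 3) (c : ℝ)
    (hc : c ≠ 0) :
    {m : ℤ | ∃ p ∈ K, ∃ r ∈ L, r i = p i + m * c}.Finite := by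
  have ev : Continuous (fun p : E3 => p i) := continuous_apply i
  obtain ⟨A, hA⟩ := (hK.image ev).isBounded.exists_norm_le
  obtain ⟨B, hB⟩ := (hL.image ev).isBounded.exists_norm_le
  have hfin : (Set.Icc (⌊-((A + B) / |c|)⌋) ⌈(A + B) / |c|⌉ : Set ℤ).Finite := Set.finite_Icc _ _
  refine hfin.subset ?_
  rintro m ⟨p, hp, r, hr, e⟩
  have h1 := hA _ ⟨p, hp, rfl⟩
  have h2 := hB _ ⟨r, hr, rfl⟩
  simp only [Real.norm_eq_abs] at h1 h2
  have h3 : |(m : ℝ)| * |c| ≤ A + B := by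
    rw [← abs_mul, show (m : ℝ) * c = r i - p i by linarith]
    linarith [abs_sub (r i) (p i)]
  have h4 : |(m : ℝ)| ≤ (A + B) / |c| := by
    rw [le_div_iff₀ (abs_pos.mpr hc)]; exact h3
  rw [abs_le] at h4
  constructor
  · have := (Int.floor_le (-((A + B) / |c|))).trans h4.1
    exact_mod_cast this
  · have := h4.2.trans (Int.le_ceil _)
    exact_mod_cast this

theorem exists_shift (c : ℝ) (hc : c ≠ 0) (r : ℝ) : ∃ m : ℤ, r + m * c ∈ Set.Icc (-|c|) |c| := by
  refine ⟨-⌊r / c⌋, ?_⟩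
  have e : r + ((-⌊r / c⌋ : ℤ) : ℝ) * c = Int.fract (r / c) * c := by
    rw [Int.fract]; push_cast; field_simp; ring
  rw [e, Set.mem_Icc, ← abs_le, abs_mul, abs_of_nonneg (Int.fract_nonneg _)]
  exact mul_le_of_le_one_left (abs_nonneg _) (Int.fract_lt_one _).le

/-- A properly discontinuous group contains a discrete set of translations along the first axis. -/
theorem rational_of_pd (Γ : Subgroup AffT) (hpd : IsProperlyDiscontinuous Γ) (s x : ℝ)
    (hx : x ≠ 0) (u v : AffT) (hu : u ∈ Γ) (hv : v ∈ Γ)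
    (hus : IsTranslationBy u ![s, 0, 0]) (hvx : IsTranslationBy v ![x, 0, 0]) :
    ∃ q : ℚ, s / x = (q : ℝ) := by
  let P : AddSubgroup ℝ :=
    { carrier := {r | ∃ γ ∈ Γ, IsTranslationBy γ ![r, 0, 0]}
      zero_mem' := ⟨1, Γ.one_mem, fun p => by
        ext i; fin_cases i <;> simp⟩
      add_mem' := by
        rintro r r' ⟨γ, hγ, e⟩ ⟨γ', hγ', e'⟩
        refine ⟨γ * γ', Γ.mul_mem hγ hγ', fun p => ?_⟩
        rw [AffineEquiv.mul_def, AffineEquiv.trans_apply, e, e']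
        rw [add_assoc]
        congr 1
        simp [add_comm]
      neg_mem' := by
        rintro r ⟨γ, hγ, e⟩
        refine ⟨γ⁻¹, Γ.inv_mem hγ, fun p => ?_⟩
        have h1 := e (γ⁻¹ p)
        have h2 : γ (γ⁻¹ p) = p := γ.apply_symm_apply p
        rw [h2] at h1
        have h3 : (![r, 0, 0] : E3) + ![-r, 0, 0] = 0 := by simp
        conv_rhs => rw [h1]
        rw [add_assoc, h3, add_zero] }
  have hsP : s ∈ P := ⟨u, hu, hus⟩
  have hxP : x ∈ P := ⟨v, hv, hvx⟩
  rcases AddSubgroup.dense_or_cyclic P with hd | ⟨a, ha⟩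
  · exfalso
    have hL : IsCompact (Set.Icc (0 : E3) ![1, 0, 0]) := isCompact_Icc
    have hfin := hpd {0} _ isCompact_singleton hL
    have hfin2 := hfin.image (fun γ => γ 0 0)
    have hd2 := hd.diff_finite hfin2
    obtain ⟨r, hr, hrP, hrn⟩ := hd2.inter_open_nonempty (Set.Ioo 0 1) isOpen_Ioo ⟨1/2, by norm_num⟩
    apply hrn
    obtain ⟨γ, hγ, e⟩ := hrP
    refine ⟨γ, ⟨hγ, γ 0, ⟨0, rfl, rfl⟩, ?_⟩, ?_⟩
    · rw [e, zero_add]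
      constructor
      · intro i; fin_cases i <;> simp [hr.1.le]
      · intro i; fin_cases i <;> simp [hr.2.le]
    · simp [e 0]
  · rw [ha, AddSubgroup.mem_closure_singleton] at hsP hxP
    obtain ⟨m, rfl⟩ := hsP
    obtain ⟨n, rfl⟩ := hxP
    refine ⟨(m : ℚ) / n, ?_⟩
    have ha0 : a ≠ 0 := by rintro rfl; simp at hx
    simp only [zsmul_eq_mul]
    push_cast
    exact mul_div_mul_right _ _ ha0

/-- rank-one translation subgroup, `c₂ = 0` case. -/
theorem stmt_8 (a₁ b₂ c₁ : ℤ) (ha₁ : a₁ ≠ 0) (hb₂ : b₂ ≠ 0) (hc₁ : c₁ ≠ 0) (b₁ : ℤ)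
    (z₁ x₂ y₂ z₂ x₃ : ℝ) (hx₃ : x₃ ≠ 0)
    (g h t : AffT)
    (hg : HasForm g !![1, (a₁ : ℝ), (b₁ : ℝ); 0, 1, (c₁ : ℝ); 0, 0, 1] ![0, 0, z₁])
    (hh : HasForm h !![1, 0, (b₂ : ℝ); 0, 1, 0; 0, 0, 1] ![x₂, y₂, z₂])
    (ht : IsTranslationBy t ![x₃, 0, 0])
    (Γ : Subgroup AffT) (hΓ : Γ = Subgroup.closure {g, h, t})
    (hrk : ∀ γ ∈ Γ, ∀ w : E3, IsTranslationBy γ w → ∃ r : ℝ, w = r • ![x₃, 0, 0]) :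
    ((IsFreeAction Γ ∧ IsProperlyDiscontinuous Γ) ↔
      (z₂ = 0 ∧ z₁ * y₂ * x₃ ≠ 0 ∧
        ∃ q : ℚ, ((a₁ : ℝ) * y₂ - (b₂ : ℝ) * z₁) / x₃ = (q : ℝ))) ∧
    (IsFreeAction Γ ∧ IsProperlyDiscontinuous Γ → HasCompactQuotient Γ) := by
  have g0 : ∀ p, g p 0 = p 0 + a₁ * p 1 + b₁ * p 2 := by
    intro p; rw [hg p]; simp [dotProduct, Fin.sum_univ_three]
  have g1 : ∀ p, g p 1 = p 1 + c₁ * p 2 := by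
    intro p; rw [hg p]; simp [dotProduct, Fin.sum_univ_three]
  have g2 : ∀ p, g p 2 = p 2 + z₁ := by
    intro p; rw [hg p]; simp [dotProduct, Fin.sum_univ_three]
  have h0 : ∀ p, h p 0 = p 0 + b₂ * p 2 + x₂ := by
    intro p; rw [hh p]; simp [dotProduct, Fin.sum_univ_three]
  have h1 : ∀ p, h p 1 = p 1 + y₂ := by
    intro p; rw [hh p]; simp [dotProduct, Fin.sum_univ_three]
  have h2 : ∀ p, h p 2 = p 2 + z₂ := by
    intro p; rw [hh p]; simp [dotProduct, Fin.sum_univ_three]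
  have t0 : ∀ p, t p 0 = p 0 + x₃ := by intro p; rw [ht p]; simp
  have t1 : ∀ p, t p 1 = p 1 + 0 := by intro p; rw [ht p]; simp
  have t2 : ∀ p, t p 2 = p 2 + 0 := by intro p; rw [ht p]; simp
  have gΓ : g ∈ Γ := by rw [hΓ]; exact Subgroup.subset_closure (by simp)
  have hhΓ : h ∈ Γ := by rw [hΓ]; exact Subgroup.subset_closure (by simp)
  have tΓ : t ∈ Γ := by rw [hΓ]; exact Subgroup.subset_closure (by simp)
  have ext3 : ∀ p q : E3, p 0 = q 0 → p 1 = q 1 → p 2 = q 2 → p = q := by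
    intro p q e0 e1 e2
    ext i; fin_cases i
    exacts [e0, e1, e2]
  have one_coord : ∀ (f : AffT) (p : E3), f (f⁻¹ p) = p := fun f p => f.apply_symm_apply p
  -- the commutator is a translation
  have wΓ : g * h * (h * g)⁻¹ ∈ Γ :=
    Γ.mul_mem (Γ.mul_mem gΓ hhΓ) (Γ.inv_mem (Γ.mul_mem hhΓ gΓ))
  have hw : IsTranslationBy (g * h * (h * g)⁻¹)
      ![a₁ * y₂ + b₁ * z₂ - b₂ * z₁, c₁ * z₂, 0] := by
    intro p
    obtain ⟨q, rfl⟩ : ∃ q, (h * g) q = p := ⟨(h * g)⁻¹ p, one_coord _ p⟩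
    have e : (g * h * (h * g)⁻¹) ((h * g) q) = g (h q) := by
      have : (h * g)⁻¹ ((h * g) q) = q := (h * g).symm_apply_apply q
      rw [AffineEquiv.mul_def, AffineEquiv.trans_apply, this]; rfl
    have e' : (h * g) q = h (g q) := rfl
    rw [e, e']
    apply ext3 <;> simp [g0, g1, g2, h0, h1, h2] <;> ring
  have hz₂ : z₂ = 0 := by
    obtain ⟨r, hr⟩ := hrk _ wΓ _ hw
    have := congrFun hr 1
    simpa [hc₁] using this
  subst hz₂
  have hw' : IsTranslationBy (g * h * (h * g)⁻¹) ![a₁ * y₂ - b₂ * z₁, 0, 0] := by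
    simpa using hw
  have fwd : IsFreeAction Γ ∧ IsProperlyDiscontinuous Γ →
      ((0 : ℝ) = 0 ∧ z₁ * y₂ * x₃ ≠ 0 ∧
        ∃ q : ℚ, ((a₁ : ℝ) * y₂ - (b₂ : ℝ) * z₁) / x₃ = (q : ℝ)) := by
    rintro ⟨hfree, hpd⟩
    refine ⟨rfl, mul_ne_zero (mul_ne_zero ?_ ?_) hx₃,
      rational_of_pd Γ hpd _ _ hx₃ _ _ wΓ tΓ hw' ht⟩
    · rintro rfl
      have e := hfree g gΓ ⟨0, by apply ext3 <;> simp [g0, g1, g2]⟩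
      have := g0 ![0, 1, 0]
      rw [e] at this
      simp at this
      exact ha₁ (by exact_mod_cast this.symm)
    · rintro rfl
      have hb : (b₂ : ℝ) ≠ 0 := by exact_mod_cast hb₂
      have e := hfree h hhΓ ⟨![0, 0, -x₂ / b₂], by
        apply ext3 <;> simp [h0, h1, h2]
        field_simp; ring⟩
      have r0 := h0 0
      have r1 := h0 ![0, 0, 1]
      rw [e] at r0 r1
      simp at r0 r1
      rw [← r0] at r1
      simp at r1
      exact hb r1.symm
  refine ⟨⟨fwd, ?_⟩, ?_⟩
  · rintro ⟨-, hne, q, hq⟩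
    have hz₁ : z₁ ≠ 0 := by rintro rfl; simp at hne
    have hy₂ : y₂ ≠ 0 := by rintro rfl; simp at hne
    have hD : (q.den : ℝ) ≠ 0 := by exact_mod_cast q.den_ne_zero
    obtain ⟨d, hd⟩ : ∃ d : ℝ, d = x₃ / q.den := ⟨_, rfl⟩
    have hd0 : d ≠ 0 := by rw [hd]; exact div_ne_zero hx₃ hD
    have hxd : x₃ = q.den * d := by rw [hd]; field_simp
    have hsd : (a₁ : ℝ) * y₂ - b₂ * z₁ = q.num * d := by
      rw [div_eq_iff hx₃] at hq
      rw [hq, hd]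
      conv_lhs => rw [Rat.cast_def]
      ring
    obtain ⟨τ, hτ⟩ : ∃ τ : AffT, τ = AffineEquiv.constVAdd ℝ E3 ![d, 0, 0] := ⟨_, rfl⟩
    have τ0 : ∀ p, τ p 0 = p 0 + d := by intro p; rw [hτ]; simp [add_comm]
    have τ1 : ∀ p, τ p 1 = p 1 + 0 := by intro p; rw [hτ]; simp
    have τ2 : ∀ p, τ p 2 = p 2 + 0 := by intro p; rw [hτ]; simp
    have T0 := zpow_coord τ 0 d τ0
    have T1 := zpow_coord τ 1 0 τ1
    have T2 := zpow_coord τ 2 0 τ2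
    have H1 := zpow_coord h 1 y₂ h1
    have H2 := zpow_coord h 2 0 h2
    have G2 := zpow_coord g 2 z₁ g2
    have mapp : ∀ (f f' : AffT) (p : E3), (f * f') p = f (f' p) := fun _ _ _ => rfl
    have htτ : t = τ ^ (q.den : ℤ) := by
      apply AffineEquiv.ext; intro p
      apply ext3 <;> simp only [t0, t1, t2, T0, T1, T2, hxd] <;> push_cast <;> ring
    have cg : Commute τ g := by
      apply AffineEquiv.ext; intro p
      apply ext3 <;> simp only [mapp, τ0, τ1, τ2, g0, g1, g2] <;> ring
    have ch : Commute τ h := by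
      apply AffineEquiv.ext; intro p
      apply ext3 <;> simp only [mapp, τ0, τ1, τ2, h0, h1, h2] <;> ring
    have hgh : g * h = τ ^ q.num * (h * g) := by
      apply AffineEquiv.ext; intro p
      apply ext3 <;> simp only [mapp, T0, T1, T2, h0, h1, h2, g0, g1, g2] <;> linarith
    have nf : ∀ γ ∈ Γ, ∃ k n m : ℤ, γ = τ ^ k * (h ^ n * g ^ m) := by
      rw [hΓ, htτ]
      exact normal_form g h τ q.num q.den cg ch hgh
    constructor
    · rintro γ hγ ⟨p, hp⟩
      obtain ⟨k, n, m, rfl⟩ := nf γ hγ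
      have e2 := congrFun hp 2
      simp only [mapp, T2, H2, G2] at e2
      have hm : m = 0 := by simpa [hz₁] using e2
      subst hm
      have e1 := congrFun hp 1
      simp only [mapp, T1, H1, zpow_zero] at e1
      have hn : n = 0 := by simpa [hy₂] using e1
      subst hn
      have e0 := congrFun hp 0
      simp only [mapp, T0, zpow_zero] at e0
      have hk : k = 0 := by simpa [hd0] using e0
      subst hk
      simp
    · intro K L hK hL
      have cont : ∀ f : AffT, Continuous f := fun f =>
        (AffineMap.continuous_of_finiteDimensional f.toAffineMap)
      have F1 := finite_shift K L hK hL 2 z₁ hz₁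
      have F2 := fun m : ℤ => finite_shift ((g ^ m) '' K) L (hK.image (cont _)) hL 1 y₂ hy₂
      have F3 := fun m n : ℤ => finite_shift ((h ^ n * g ^ m) '' K) L (hK.image (cont _)) hL 0 d hd0
      refine (F1.biUnion fun m _ => (F2 m).biUnion fun n _ =>
        (F3 m n).image fun k => τ ^ k * (h ^ n * g ^ m)).subset ?_
      rintro γ ⟨hγ, r, ⟨p, hp, rfl⟩, hr⟩
      obtain ⟨k, n, m, rfl⟩ := nf γ hγ
      simp only [Set.mem_iUnion]
      refine ⟨m, ⟨p, hp, _, hr, ?_⟩, n, ⟨_, ⟨p, hp, rfl⟩, _, hr, ?_⟩, k,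
        ⟨_, ⟨p, hp, rfl⟩, _, hr, ?_⟩, rfl⟩
      · simp only [mapp, T2, H2, G2]; ring
      · simp only [mapp, T1, H1]; ring
      · simp only [mapp, T0]
  · intro hyp
    obtain ⟨-, hne, -⟩ := fwd hyp
    have hz₁ : z₁ ≠ 0 := by rintro rfl; simp at hne
    have hy₂ : y₂ ≠ 0 := by rintro rfl; simp at hne
    have T0 := zpow_coord t 0 x₃ t0
    have T1 := zpow_coord t 1 0 t1
    have T2 := zpow_coord t 2 0 t2
    have H1 := zpow_coord h 1 y₂ h1
    have H2 := zpow_coord h 2 0 h2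
    have G2 := zpow_coord g 2 z₁ g2
    have mapp : ∀ (f f' : AffT) (p : E3), (f * f') p = f (f' p) := fun _ _ _ => rfl
    have hbox : IsCompact (Set.Icc (![-|x₃|, -|y₂|, -|z₁|] : E3) ![|x₃|, |y₂|, |z₁|]) :=
      isCompact_Icc
    have hcont : Continuous (fun p : E3 => (Quotient.mk (orbitSetoid Γ) p)) :=
      continuous_quotient_mk'
    refine ⟨?_⟩
    convert hbox.image hcont
    symm
    rw [Set.eq_univ_iff_forall]
    intro y
    induction y using Quotient.inductionOn with
    | h p =>
    obtain ⟨m, hm⟩ := exists_shift z₁ hz₁ (p 2)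
    obtain ⟨n, hn⟩ := exists_shift y₂ hy₂ ((g ^ m) p 1)
    obtain ⟨k, hk⟩ := exists_shift x₃ hx₃ ((h ^ n * g ^ m) p 0)
    refine ⟨(t ^ k * (h ^ n * g ^ m)) p, ?_, ?_⟩
    · have e2 : (t ^ k * (h ^ n * g ^ m)) p 2 = p 2 + m * z₁ := by
        simp only [mapp, T2, H2, G2]; ring
      have e1 : (t ^ k * (h ^ n * g ^ m)) p 1 = (g ^ m) p 1 + n * y₂ := by
        simp only [mapp, T1, H1]; ring
      have e0 : (t ^ k * (h ^ n * g ^ m)) p 0 = (h ^ n * g ^ m) p 0 + k * x₃ := by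
        simp only [mapp, T0]
      rw [← e2] at hm
      rw [← e1] at hn
      rw [← e0] at hk
      constructor
      · intro i; fin_cases i
        exacts [hk.1, hn.1, hm.1]
      · intro i; fin_cases i
        exacts [hk.2, hn.2, hm.2]
    · symm
      apply Quotient.sound
      exact ⟨_, Γ.mul_mem (Γ.zpow_mem tΓ _)
        (Γ.mul_mem (Γ.zpow_mem hhΓ _) (Γ.zpow_mem gΓ _)), rfl⟩
end
end

section
/- Let a₁, c₁, c₂ be nonzero integers, b₁, b₂ ∈ ℤ, z₁, x₂, y₂, z₂, x₃ ∈ ℝ with x₃ ≠ 0, and let Γ be the group of affine transformations of ℝ³ generated by g = ([[1,a₁,b₁],[0,1,c₁],[0,0,1]], (0,0,z₁)), h = ([[1,0,b₂],[0,1,c₂],[0,0,1]], (x₂,y₂,z₂)) and the pure translation t = (I, (x₃,0,0)). Assume that the translation subgroup of Γ has rank 1, i.e., the vector part of every pure translation belonging to Γ is a real multiple of (x₃,0,0). Then the action of Γ on ℝ³ is not both free and properly discontinuous. -/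
open Matrix

noncomputable section

/-- Unipotent upper triangular form with partially tracked data. -/
def UForm (γ : AffT) (A C Z : ℝ) : Prop :=
  ∃ B X Y : ℝ, ∀ v : E3, γ v = ![v 0 + A * v 1 + B * v 2 + X, v 1 + C * v 2 + Y, v 2 + Z]

lemma UForm.one : UForm 1 0 0 0 := by
  refine ⟨0, 0, 0, fun v => ?_⟩
  ext i
  fin_cases i <;> simp

lemma UForm.mul {γ δ : AffT} {A C Z A' C' Z' : ℝ} (h1 : UForm γ A C Z) (h2 : UForm δ A' C' Z') :
    UForm (γ * δ) (A + A') (C + C') (Z + Z') := by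
  obtain ⟨B, X, Y, h1⟩ := h1
  obtain ⟨B', X', Y', h2⟩ := h2
  refine ⟨B + B' + A * C', X + X' + A * Y' + B * Z', Y + Y' + C * Z', fun v => ?_⟩
  have : (γ * δ) v = γ (δ v) := rfl
  rw [this, h1, h2]
  ext i
  fin_cases i <;> simp <;> ring

lemma UForm.inv {γ : AffT} {A C Z : ℝ} (h1 : UForm γ A C Z) :
    UForm γ⁻¹ (-A) (-C) (-Z) := by
  obtain ⟨B, X, Y, h1⟩ := h1
  refine ⟨A * C - B, -X + A * Y + B * Z - A * C * Z, -Y + C * Z, fun v => ?_⟩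
  have h2 : γ (γ⁻¹ v) = v := γ.apply_symm_apply v
  apply γ.injective
  rw [h2, h1]
  ext i
  fin_cases i <;> simp <;> ring

lemma UForm.npow {γ : AffT} {A C Z : ℝ} (h1 : UForm γ A C Z) (n : ℕ) :
    UForm (γ ^ n) (n * A) (n * C) (n * Z) := by
  induction n with
  | zero => simpa using UForm.one
  | succ k ih =>
    rw [pow_succ]
    convert ih.mul h1 using 1 <;> push_cast <;> ring

lemma UForm.zpow {γ : AffT} {A C Z : ℝ} (h1 : UForm γ A C Z) (n : ℤ) :
    UForm (γ ^ n) (n * A) (n * C) (n * Z) := by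
  obtain ⟨k, rfl | rfl⟩ := n.eq_nat_or_neg
  · simpa using h1.npow k
  · simpa using (h1.npow k).inv

lemma UForm.ne_one {γ : AffT} {A C Z : ℝ} (h1 : UForm γ A C Z) (hC : C ≠ 0) : γ ≠ 1 := by
  rintro rfl
  obtain ⟨B, X, Y, h1⟩ := h1
  have e0 := congrFun (h1 ![0, 0, 0]) 1
  have e1 := congrFun (h1 ![0, 0, 1]) 1
  simp at e0 e1
  apply hC
  linarith

/-- `γ` translates the line through `p` in the first direction by `e`. -/
def LineTr (γ : AffT) (p : E3) (e : ℝ) : Prop :=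
  ∀ r : ℝ, γ (p + r • ![1, 0, 0]) = p + (r + e) • ![1, 0, 0]

lemma LineTr.mul {γ δ : AffT} {p : E3} {e e' : ℝ} (h1 : LineTr γ p e) (h2 : LineTr δ p e') :
    LineTr (γ * δ) p (e + e') := by
  intro r
  have : (γ * δ) (p + r • ![1, 0, 0]) = γ (δ (p + r • ![1, 0, 0])) := rfl
  rw [this, h2, h1, add_assoc, add_comm e']

lemma LineTr.inv {γ : AffT} {p : E3} {e : ℝ} (h1 : LineTr γ p e) : LineTr γ⁻¹ p (-e) := by
  intro r
  apply γ.injective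
  rw [h1]
  have h2 : γ (γ⁻¹ (p + r • ![1, 0, 0])) = p + r • ![1, 0, 0] := γ.apply_symm_apply _
  rw [h2]
  simp

lemma LineTr.npow {γ : AffT} {p : E3} {e : ℝ} (h1 : LineTr γ p e) (n : ℕ) :
    LineTr (γ ^ n) p (n * e) := by
  induction n with
  | zero => intro r; simp
  | succ k ih =>
    rw [pow_succ]
    convert ih.mul h1 using 1
    push_cast; ring

lemma LineTr.zpow {γ : AffT} {p : E3} {e : ℝ} (h1 : LineTr γ p e) (n : ℤ) :
    LineTr (γ ^ n) p (n * e) := by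
  obtain ⟨k, rfl | rfl⟩ := n.eq_nat_or_neg
  · simpa using h1.npow k
  · simpa using (h1.npow k).inv

/-- Proper discontinuity forces commensurability of translations along a line. -/
lemma commens {Γ : Subgroup AffT} (hP : IsProperlyDiscontinuous Γ) {u t : AffT} (hu : u ∈ Γ)
    (ht : t ∈ Γ) {p : E3} {e x : ℝ} (hx : x ≠ 0) (h1 : LineTr u p e) (h2 : LineTr t p x) :
    ∃ n m : ℤ, n ≠ 0 ∧ (n : ℝ) * e = m * x := by
  set L : Set E3 := (fun r : ℝ => p + r • (![1, 0, 0] : E3)) '' Set.Icc (-|x|) |x| with hL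
  have hLc : IsCompact L := isCompact_Icc.image (by fun_prop)
  have hfin := hP {p} L isCompact_singleton hLc
  let F : ℤ → AffT := fun n => u ^ n * t ^ (-⌊n * e / x⌋)
  have hF : ∀ n : ℤ, LineTr (F n) p (n * e + (-⌊n * e / x⌋ : ℤ) * x) := fun n =>
    (h1.zpow n).mul (h2.zpow _)
  have hF0 : ∀ n : ℤ, F n p = p + (n * e + (-⌊n * e / x⌋ : ℤ) * x) • ![1, 0, 0] := by
    intro n
    simpa using hF n 0
  have hmem : ∀ n : ℤ, F n ∈ {γ : AffT | γ ∈ Γ ∧ ((γ '' {p}) ∩ L).Nonempty} := by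
    intro n
    refine ⟨Γ.mul_mem (Γ.zpow_mem hu _) (Γ.zpow_mem ht _), F n p, ⟨p, rfl, rfl⟩, ?_⟩
    rw [hF0]
    refine ⟨_, ?_, rfl⟩
    have : (n * e + (-⌊n * e / x⌋ : ℤ) * x) = Int.fract (n * e / x) * x := by
      unfold Int.fract
      push_cast
      field_simp
      ring
    rw [this, Set.mem_Icc, ← abs_le, abs_mul, abs_of_nonneg (Int.fract_nonneg _)]
    exact mul_le_of_le_one_left (abs_nonneg _) (Int.fract_lt_one _).le
  have hni : ¬ Function.Injective F := by
    intro hi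
    exact (Set.infinite_range_of_injective hi) (hfin.subset (Set.range_subset_iff.2 hmem))
  rw [Function.not_injective_iff] at hni
  obtain ⟨n, n', he, hne⟩ := hni
  have h3 := hF0 n
  rw [he, hF0 n'] at h3
  have h4 := congrFun h3 0
  simp at h4
  refine ⟨n - n', ⌊n * e / x⌋ - ⌊n' * e / x⌋, sub_ne_zero.2 hne, ?_⟩
  push_cast
  linarith

/-- rank-one translation subgroup, `c₂ ≠ 0` case is impossible. -/
theorem stmt_9 (a₁ c₁ c₂ : ℤ) (ha₁ : a₁ ≠ 0) (hc₁ : c₁ ≠ 0) (hc₂ : c₂ ≠ 0) (b₁ b₂ : ℤ)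
    (z₁ x₂ y₂ z₂ x₃ : ℝ) (hx₃ : x₃ ≠ 0)
    (g h t : AffT)
    (hg : HasForm g !![1, (a₁ : ℝ), (b₁ : ℝ); 0, 1, (c₁ : ℝ); 0, 0, 1] ![0, 0, z₁])
    (hh : HasForm h !![1, 0, (b₂ : ℝ); 0, 1, (c₂ : ℝ); 0, 0, 1] ![x₂, y₂, z₂])
    (ht : IsTranslationBy t ![x₃, 0, 0])
    (Γ : Subgroup AffT) (hΓ : Γ = Subgroup.closure {g, h, t})
    (hrk : ∀ γ ∈ Γ, ∀ w : E3, IsTranslationBy γ w → ∃ r : ℝ, w = r • ![x₃, 0, 0]) :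
    ¬ (IsFreeAction Γ ∧ IsProperlyDiscontinuous Γ) := by
  rintro ⟨hF, hP⟩
  have gΓ : g ∈ Γ := hΓ ▸ Subgroup.subset_closure (by simp)
  have hhΓ : h ∈ Γ := hΓ ▸ Subgroup.subset_closure (by simp)
  have tΓ : t ∈ Γ := hΓ ▸ Subgroup.subset_closure (by simp)
  clear hΓ hrk
  have ha : (a₁ : ℝ) ≠ 0 := by exact_mod_cast ha₁
  have hc : (c₁ : ℝ) ≠ 0 := by exact_mod_cast hc₁
  have hc' : (c₂ : ℝ) ≠ 0 := by exact_mod_cast hc₂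
  have hgv : ∀ x y z : ℝ, g ![x, y, z] = ![x + a₁ * y + b₁ * z, y + c₁ * z, z + z₁] := by
    intro x y z
    rw [hg]
    ext i
    fin_cases i <;> simp <;> ring
  have hhv : ∀ x y z : ℝ, h ![x, y, z] = ![x + b₂ * z + x₂, y + c₂ * z + y₂, z + z₂] := by
    intro x y z
    rw [hh]
    ext i
    fin_cases i <;> simp <;> ring
  have hvec : ∀ v : E3, v = ![v 0, v 1, v 2] := by
    intro v
    ext i
    fin_cases i <;> rfl
  have gU : UForm g a₁ c₁ z₁ := by
    refine ⟨b₁, 0, 0, fun v => ?_⟩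
    conv_lhs => rw [hvec v]
    rw [hgv]; simp
  have hU : UForm h 0 c₂ z₂ := by
    refine ⟨b₂, x₂, y₂, fun v => ?_⟩
    conv_lhs => rw [hvec v]
    rw [hhv]; simp
  have tU : UForm t 0 0 0 := by
    refine ⟨0, x₃, 0, fun v => ?_⟩
    rw [ht]
    ext i
    fin_cases i <;> simp
  have tL : ∀ p, LineTr t p x₃ := by
    intro p r
    rw [ht, hvec p]
    ext i
    fin_cases i <;> simp
    ring
  -- the commutator
  obtain ⟨k, hk⟩ : ∃ k : AffT, k = (g * h) * (h * g)⁻¹ := ⟨_, rfl⟩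
  have kΓ : k ∈ Γ := hk ▸ Γ.mul_mem (Γ.mul_mem gΓ hhΓ) (Γ.inv_mem (Γ.mul_mem hhΓ gΓ))
  obtain ⟨d, hd⟩ : ∃ d : ℝ, d = c₁ * z₂ - c₂ * z₁ := ⟨_, rfl⟩
  obtain ⟨β, hβ⟩ : ∃ β : ℝ, β = a₁ * y₂ + b₁ * z₂ - b₂ * z₁ - a₁ * c₂ * (z₁ + z₂) := ⟨_, rfl⟩
  have hkv : ∀ x y z : ℝ, k ![x, y, z] = ![x + a₁ * c₂ * z + β, y + d, z] := by
    intro x y z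
    obtain ⟨w, hw⟩ : ∃ w, w = (h * g)⁻¹ ![x, y, z] := ⟨_, rfl⟩
    have e1 : k ![x, y, z] = g (h w) := by rw [hk, hw]; rfl
    have e2 : ![x, y, z] = h (g w) := by
      rw [hw]; exact ((h * g).apply_symm_apply _).symm
    rw [e1]
    rw [hvec w] at e2 ⊢
    rw [hgv, hhv] at e2
    rw [hhv, hgv]
    have e20 := congrFun e2 0
    have e21 := congrFun e2 1
    have e22 := congrFun e2 2
    simp at e20 e21 e22
    rw [hβ, hd, e20, e21, e22]
    ext i
    fin_cases i <;> simp <;> ring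
  have hd0 : d ≠ 0 := by
    intro h0
    have hk1 : k = 1 := by
      apply hF k kΓ
      refine ⟨![0, 0, -β / (a₁ * c₂)], ?_⟩
      rw [hkv, h0]
      ext i
      fin_cases i <;> simp
      field_simp
      ring
    have e0 := congrFun (hkv 0 0 0) 0
    have e1 := congrFun (hkv 0 0 1) 0
    rw [hk1] at e0 e1
    simp at e0 e1
    rw [← e0] at e1
    simp [ha₁, hc₂] at e1
  -- central translations
  have central : ∀ (γ δ : AffT) (e : ℝ), γ ∈ Γ → δ ∈ Γ →
      (∀ x y z : ℝ, γ ![x, y, z] = δ ![x, y, z] + e • ![1, 0, 0]) →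
      ∃ n m : ℤ, n ≠ 0 ∧ (n : ℝ) * e = m * x₃ := by
    intro γ δ e hγ hδ hc
    refine commens hP (u := γ * δ⁻¹) (p := 0) (Γ.mul_mem hγ (Γ.inv_mem hδ)) tΓ hx₃ ?_ (tL _)
    intro r
    have e1 : (γ * δ⁻¹) (0 + r • ![1, 0, 0]) = γ (δ⁻¹ (0 + r • ![1, 0, 0])) := rfl
    have e2 : δ (δ⁻¹ (0 + r • ![1, 0, 0])) = 0 + r • ![1, 0, 0] := δ.apply_symm_apply _
    rw [e1, hvec (δ⁻¹ (0 + r • ![1, 0, 0])), hc, ← hvec, e2, add_smul, add_assoc]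
  obtain ⟨n, m, hn, hnm⟩ := central (k * h) (h * k) (a₁ * c₂ * z₂) (Γ.mul_mem kΓ hhΓ)
    (Γ.mul_mem hhΓ kΓ) (by
      intro x y z
      have e1 : (k * h) ![x, y, z] = k (h ![x, y, z]) := rfl
      have e2 : (h * k) ![x, y, z] = h (k ![x, y, z]) := rfl
      rw [e1, e2, hkv, hhv, hhv, hkv]
      ext i
      fin_cases i <;> simp <;> ring)
  obtain ⟨n', m', hn', hnm'⟩ := central (g * k) (k * g) (a₁ * (c₁ * z₂ - 2 * c₂ * z₁))
    (Γ.mul_mem gΓ kΓ) (Γ.mul_mem kΓ gΓ) (by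
      intro x y z
      have e1 : (g * k) ![x, y, z] = g (k ![x, y, z]) := rfl
      have e2 : (k * g) ![x, y, z] = k (g ![x, y, z]) := rfl
      rw [e1, e2, hkv, hgv, hgv, hkv, hd]
      ext i
      fin_cases i <;> simp <;> ring)
  have hnR : (n : ℝ) ≠ 0 := by exact_mod_cast hn
  have hnR' : (n' : ℝ) ≠ 0 := by exact_mod_cast hn'
  by_cases hz2 : z₂ = 0
  · subst hz2
    obtain ⟨z, hz⟩ : ∃ z : ℝ, z = -y₂ / c₂ := ⟨_, rfl⟩
    have hz' : c₂ * z + y₂ = 0 := by rw [hz]; field_simp; ring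
    have hL : LineTr h ![0, 0, z] (b₂ * z + x₂) := by
      intro r
      have e1 : (![0, 0, z] : E3) + r • ![1, 0, 0] = ![r, 0, z] := by
        ext i
        fin_cases i <;> simp
      rw [e1, hhv]
      ext i
      fin_cases i <;> simp
      · ring
      · linarith
    obtain ⟨i, j, hi, hij⟩ := commens hP hhΓ tΓ hx₃ hL (tL _)
    have hiR : (i : ℝ) ≠ 0 := by exact_mod_cast hi
    have hLL := (hL.zpow i).mul ((tL ![0, 0, z]).zpow (-j)) 0
    have hUU := (hU.zpow i).mul (tU.zpow (-j))
    refine hUU.ne_one ?_ (hF _ (Γ.mul_mem (Γ.zpow_mem hhΓ _) (Γ.zpow_mem tΓ _)) ⟨![0, 0, z], ?_⟩)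
    · simp [hi, hc₂]
    · rw [hij] at hLL
      simpa using hLL
  · -- general case
    have hm : (m : ℝ) ≠ 0 := by
      intro h0
      rw [h0, zero_mul] at hnm
      simp [hn, ha₁, hc₂, hz2] at hnm
    obtain ⟨P, hPd⟩ : ∃ P : ℤ, P = 2 * m * n' * c₂ := ⟨_, rfl⟩
    obtain ⟨Q, hQd⟩ : ∃ Q : ℤ, Q = m' * n * c₂ - m * n' * c₁ := ⟨_, rfl⟩
    have hP0 : (P : ℝ) ≠ 0 := by
      rw [hPd]; push_cast
      exact mul_ne_zero (mul_ne_zero (mul_ne_zero two_ne_zero hm) hnR') hc'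
    have hPQ : (P : ℝ) * z₁ + Q * z₂ = 0 := by
      rw [hPd, hQd]; push_cast
      have : (a₁ : ℝ) * x₃ * ((2 * m * n' * c₂ : ℝ) * z₁ + (m' * n * c₂ - m * n' * c₁) * z₂) = 0 := by
        linear_combination (m' * x₃) * hnm - (m * x₃) * hnm'
      exact (mul_eq_zero.1 this).resolve_left (mul_ne_zero ha hx₃)
    have hC : (P : ℝ) * c₁ + Q * c₂ ≠ 0 := by
      intro h0
      have : (P : ℝ) * d = 0 := by
        rw [hd]
        linear_combination z₂ * h0 - c₂ * hPQ
      exact (mul_ne_zero hP0 hd0) this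
    have hUU := (gU.zpow P).mul (hU.zpow Q)
    refine hUU.ne_one hC (hF _ (Γ.mul_mem (Γ.zpow_mem gΓ _) (Γ.zpow_mem hhΓ _)) ?_)
    obtain ⟨B, X, Y, hv⟩ := hUU
    rw [hPQ, mul_zero, add_zero] at hv
    generalize (P : ℝ) * c₁ + Q * c₂ = C at hC hv
    have hA : (P : ℝ) * a₁ ≠ 0 := mul_ne_zero hP0 ha
    generalize (P : ℝ) * a₁ = A at hA hv
    refine ⟨![0, -(B * (-Y / C) + X) / A, -Y / C], ?_⟩
    rw [hv]
    ext i
    fin_cases i <;> simp <;> field_simp <;> ring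
end
end

section
/- Let a₁ be a nonzero integer, n a positive integer, y₁, z₁, y₂, z₂, x₃ ∈ ℝ with x₃ ≠ 0, and let Γ be the group of affine transformations of ℝ³ generated by g = ([[1,a₁,0],[0,1,0],[0,0,1]], (0,y₁,z₁)), h = ([[1,0,n·a₁],[0,1,0],[0,0,1]], (0,y₂,z₂)) and the pure translation t = (I, (x₃,0,0)). Assume that the translation subgroup of Γ has rank 1, i.e., the vector part of every pure translation belonging to Γ is a real multiple of (x₃,0,0). Then Γ acts freely and properly discontinuously on ℝ³ if and only if the vectors (0,y₁,z₁), (0,y₂,z₂), (x₃,0,0) are linearly independent and (a₁·y₂ − n·a₁·z₁)/x₃ ∈ ℚ; in that case the orbit space ℝ³/Γ is compact. -/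
open Matrix

noncomputable section

/-- Quadratic part of the first coordinate of the normal form. -/
def Qf (a b y₁ y₂ z₂ : ℝ) (i j : ℤ) : ℝ :=
  a * y₁ * ((i : ℝ) * (i - 1) / 2) + b * z₂ * ((j : ℝ) * (j - 1) / 2) + i * j * a * y₂

/-- Normal form of the elements, with free translation part `s`. -/
def Gm (a b y₁ z₁ y₂ z₂ : ℝ) (γ : AffT) (i j : ℤ) (s : ℝ) : Prop :=
  ∀ x : E3, γ x = ![x 0 + i * a * x 1 + j * b * x 2 + (Qf a b y₁ y₂ z₂ i j + s),
    x 1 + (i * y₁ + j * y₂), x 2 + (i * z₁ + j * z₂)]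

/-- Normal form with integer parameters. -/
def Fm (a b y₁ z₁ y₂ z₂ x₃ : ℝ) (γ : AffT) (i j k l : ℤ) : Prop :=
  Gm a b y₁ z₁ y₂ z₂ γ i j (k * x₃ + l * (a * y₂ - b * z₁))

theorem vec3_ext {u v : E3} (h0 : u 0 = v 0) (h1 : u 1 = v 1) (h2 : u 2 = v 2) : u = v := by
  funext i
  fin_cases i
  · exact h0
  · exact h1
  · exact h2

section nf
variable {a b y₁ z₁ y₂ z₂ x₃ : ℝ}

theorem Fm_mul {γ δ : AffT} {i j k l i' j' k' l' : ℤ}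
    (h1 : Fm a b y₁ z₁ y₂ z₂ x₃ γ i j k l) (h2 : Fm a b y₁ z₁ y₂ z₂ x₃ δ i' j' k' l') :
    Fm a b y₁ z₁ y₂ z₂ x₃ (γ * δ) (i + i') (j + j') (k + k') (l + l' - i' * j) := by
  intro x
  have e : (γ * δ) x = γ (δ x) := rfl
  rw [e, h1, h2]
  apply vec3_ext <;> simp [Qf] <;> ring

theorem Fm_inv {γ : AffT} {i j k l : ℤ}
    (h1 : Fm a b y₁ z₁ y₂ z₂ x₃ γ i j k l) :
    Fm a b y₁ z₁ y₂ z₂ x₃ (γ⁻¹) (-i) (-j) (-k) (-l - i * j) := by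
  intro x
  apply γ.injective
  have e : γ (γ⁻¹ x) = x := γ.apply_symm_apply x
  rw [e, h1]
  apply vec3_ext <;> simp [Qf] <;> ring

theorem Fm_one : Fm a b y₁ z₁ y₂ z₂ x₃ 1 0 0 0 0 := by
  intro x
  have e : (1 : AffT) x = x := rfl
  rw [e]
  apply vec3_ext <;> simp [Qf]

theorem Gm_unique {γ δ : AffT} {i j : ℤ} {s : ℝ}
    (h1 : Gm a b y₁ z₁ y₂ z₂ γ i j s) (h2 : Gm a b y₁ z₁ y₂ z₂ δ i j s) : γ = δ := by
  ext1 x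
  rw [h1, h2]

theorem Gm_param (ha : a ≠ 0) (hb : b ≠ 0) {γ : AffT} {i j i' j' : ℤ} {s s' : ℝ}
    (h1 : Gm a b y₁ z₁ y₂ z₂ γ i j s) (h2 : Gm a b y₁ z₁ y₂ z₂ γ i' j' s') :
    i = i' ∧ j = j' ∧ s = s' := by
  have e0 := congrFun ((h1 ![0, 0, 0]).symm.trans (h2 ![0, 0, 0])) 0
  have e1 := congrFun ((h1 ![0, 1, 0]).symm.trans (h2 ![0, 1, 0])) 0
  have e2 := congrFun ((h1 ![0, 0, 1]).symm.trans (h2 ![0, 0, 1])) 0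
  simp at e0 e1 e2
  have hi : i = i' := by
    have : ((i : ℝ)) * a = i' * a := by linarith
    exact_mod_cast mul_right_cancel₀ ha this
  have hj : j = j' := by
    have : ((j : ℝ)) * b = j' * b := by linarith
    exact_mod_cast mul_right_cancel₀ hb this
  subst hi hj
  refine ⟨rfl, rfl, ?_⟩
  linarith

theorem int_abs_le_finite (B : ℝ) : {m : ℤ | |(m : ℝ)| ≤ B}.Finite := by
  apply (Set.finite_Icc (-⌈B⌉) ⌈B⌉).subset
  intro m hm
  have h := abs_le.1 (show |(m : ℝ)| ≤ B from hm)
  have hc := Int.le_ceil B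
  constructor
  · have : (-⌈B⌉ : ℝ) ≤ m := by linarith
    exact_mod_cast this
  · have : (m : ℝ) ≤ ⌈B⌉ := by linarith
    exact_mod_cast this

theorem Fm_exists {Γ : Subgroup AffT} {g h t : AffT} (hg : g ∈ Γ) (hh : h ∈ Γ) (ht : t ∈ Γ)
    (fg : Fm a b y₁ z₁ y₂ z₂ x₃ g 1 0 0 0) (fh : Fm a b y₁ z₁ y₂ z₂ x₃ h 0 1 0 0)
    (ft : Fm a b y₁ z₁ y₂ z₂ x₃ t 0 0 1 0) (i j k l : ℤ) :
    ∃ γ ∈ Γ, Fm a b y₁ z₁ y₂ z₂ x₃ γ i j k l := by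
  have key : ∀ (u : AffT) (p q r v : ℤ), u ∈ Γ → Fm a b y₁ z₁ y₂ z₂ x₃ u p q r v → p * q = 0 →
      ∀ m : ℤ, ∃ γ ∈ Γ, Fm a b y₁ z₁ y₂ z₂ x₃ γ (m * p) (m * q) (m * r) (m * v) := by
    intro u p q r v hu fu hpq m
    induction m using Int.induction_on with
    | zero => exact ⟨1, Γ.one_mem, by simpa using Fm_one⟩
    | succ m ih =>
      obtain ⟨γ, h1, h2⟩ := ih
      refine ⟨γ * u, Γ.mul_mem h1 hu, ?_⟩
      have := Fm_mul h2 fu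
      convert this using 1 <;> first | ring1 | linear_combination (m : ℤ) * hpq
    | pred m ih =>
      obtain ⟨γ, h1, h2⟩ := ih
      refine ⟨γ * u⁻¹, Γ.mul_mem h1 (Γ.inv_mem hu), ?_⟩
      have := Fm_mul h2 (Fm_inv fu)
      convert this using 1 <;> first | ring1 | linear_combination ((m : ℤ) + 1) * hpq
  have hc : ∃ u ∈ Γ, Fm a b y₁ z₁ y₂ z₂ x₃ u 0 0 0 1 := by
    refine ⟨g * h * (h * g)⁻¹, Γ.mul_mem (Γ.mul_mem hg hh) (Γ.inv_mem (Γ.mul_mem hh hg)), ?_⟩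
    simpa using Fm_mul (Fm_mul fg fh) (Fm_inv (Fm_mul fh fg))
  obtain ⟨u, hu, fu⟩ := hc
  obtain ⟨γ1, m1, f1⟩ := key g _ _ _ _ hg fg (by norm_num) i
  obtain ⟨γ2, m2, f2⟩ := key h _ _ _ _ hh fh (by norm_num) j
  obtain ⟨γ3, m3, f3⟩ := key t _ _ _ _ ht ft (by norm_num) k
  obtain ⟨γ4, m4, f4⟩ := key u _ _ _ _ hu fu (by norm_num) l
  refine ⟨γ1 * γ2 * γ3 * γ4, Γ.mul_mem (Γ.mul_mem (Γ.mul_mem m1 m2) m3) m4, ?_⟩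
  simpa using Fm_mul (Fm_mul (Fm_mul f1 f2) f3) f4

theorem abs_coord_le {x : E3} {R : ℝ} (h : x ∈ Metric.closedBall (0 : E3) R) (i : Fin 3) :
    |x i| ≤ R := by
  rw [mem_closedBall_zero_iff] at h
  exact (norm_le_pi_norm x i).trans h

theorem mem_ball_of {x : E3} {R : ℝ} (h0 : |x 0| ≤ R) (h1 : |x 1| ≤ R) (h2 : |x 2| ≤ R) :
    x ∈ Metric.closedBall (0 : E3) R := by
  have hR : 0 ≤ R := (abs_nonneg _).trans h0
  rw [mem_closedBall_zero_iff, pi_norm_le_iff_of_nonneg hR]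
  intro i
  fin_cases i
  · exact h0
  · exact h1
  · exact h2

theorem floor_red (hx : x₃ ≠ 0) (s : ℝ) : |s + ((-⌊s / x₃⌋ : ℤ) : ℝ) * x₃| ≤ |x₃| := by
  have e : s + ((-⌊s / x₃⌋ : ℤ) : ℝ) * x₃ = Int.fract (s / x₃) * x₃ := by
    rw [← Int.self_sub_floor]
    push_cast
    field_simp
    ring
  rw [e, abs_mul, abs_of_nonneg (Int.fract_nonneg _)]
  have := (Int.fract_lt_one (s / x₃)).le
  nlinarith [abs_nonneg x₃]

/-- Infinitely many elements moving the origin a bounded amount. -/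
theorem pd_contra (ha : a ≠ 0) (hb : b ≠ 0) (hx : x₃ ≠ 0) {Γ : Subgroup AffT}
    (hex : ∀ i j k l : ℤ, ∃ γ ∈ Γ, Fm a b y₁ z₁ y₂ z₂ x₃ γ i j k l)
    (hpd : IsProperlyDiscontinuous Γ) (i j l : ℤ → ℤ) (C : ℝ)
    (h1 : ∀ m, |(i m : ℝ) * y₁ + j m * y₂| ≤ C) (h2 : ∀ m, |(i m : ℝ) * z₁ + j m * z₂| ≤ C) :
    ∃ m m' : ℤ, m ≠ m' ∧ i m = i m' ∧ j m = j m' ∧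
      ∃ k k' : ℤ, (k : ℝ) * x₃ + l m * (a * y₂ - b * z₁) = k' * x₃ + l m' * (a * y₂ - b * z₁) := by
  let k : ℤ → ℤ := fun m =>
    -⌊(Qf a b y₁ y₂ z₂ (i m) (j m) + l m * (a * y₂ - b * z₁)) / x₃⌋
  choose γ hγ fγ using fun m => hex (i m) (j m) (k m) (l m)
  have hfin := hpd {0} (Metric.closedBall (0 : E3) (max C |x₃|)) isCompact_singleton
    (isCompact_closedBall _ _)
  have hmem : ∀ m, γ m ∈ {γ : AffT | γ ∈ Γ ∧
      ((γ '' {0}) ∩ Metric.closedBall (0 : E3) (max C |x₃|)).Nonempty} := by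
    intro m
    refine ⟨hγ m, γ m 0, ⟨0, rfl, rfl⟩, ?_⟩
    rw [fγ m]
    apply mem_ball_of
    · have := floor_red hx (Qf a b y₁ y₂ z₂ (i m) (j m) + l m * (a * y₂ - b * z₁))
      refine le_trans (le_of_eq ?_) (this.trans (le_max_right _ _))
      congr 1
      simp [k]
      ring
    · refine le_trans (le_of_eq ?_) ((h1 m).trans (le_max_left _ _))
      simp
    · refine le_trans (le_of_eq ?_) ((h2 m).trans (le_max_left _ _))
      simp
  have hni : ¬ Function.Injective γ := fun hinj =>
    Set.infinite_of_injective_forall_mem hinj hmem hfin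
  simp only [Function.Injective, not_forall] at hni
  obtain ⟨m, m', he, hne⟩ := hni
  have f1 := fγ m
  rw [he] at f1
  obtain ⟨e1, e2, e3⟩ := Gm_param ha hb f1 (fγ m')
  exact ⟨m, m', hne, e1, e2, k m, k m', e3⟩

theorem det_ne_of_pd (ha : a ≠ 0) (hb : b ≠ 0) (hx : x₃ ≠ 0) {Γ : Subgroup AffT}
    (hex : ∀ i j k l : ℤ, ∃ γ ∈ Γ, Fm a b y₁ z₁ y₂ z₂ x₃ γ i j k l)
    (hpd : IsProperlyDiscontinuous Γ) : y₁ * z₂ - y₂ * z₁ ≠ 0 := by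
  intro hD
  by_cases hu : y₁ = 0 ∧ z₁ = 0
  · obtain ⟨rfl, rfl⟩ := hu
    obtain ⟨m, m', hne, h1, -⟩ := pd_contra ha hb hx hex hpd (fun m => m) (fun _ => 0) (fun _ => 0)
      0 (by simp) (by simp)
    exact hne h1
  · have hr : ∃ r : ℝ, y₂ = r * y₁ ∧ z₂ = r * z₁ := by
      by_cases hy : y₁ = 0
      · have hz : z₁ ≠ 0 := fun hz => hu ⟨hy, hz⟩
        refine ⟨z₂ / z₁, ?_, by field_simp⟩
        rw [hy] at hD ⊢
        have : y₂ * z₁ = 0 := by linarith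
        simpa [hz] using this
      · refine ⟨y₂ / y₁, by field_simp, ?_⟩
        field_simp
        linarith
    obtain ⟨r, hr1, hr2⟩ := hr
    have hb' : ∀ (m : ℤ) (w w' : ℝ), w' = r * w → |((-⌊(m : ℝ) * r⌋ : ℤ) : ℝ) * w + m * w'| ≤ |w| := by
      intro m w w' hw
      have e : ((-⌊(m : ℝ) * r⌋ : ℤ) : ℝ) * w + m * w' = Int.fract ((m : ℝ) * r) * w := by
        rw [← Int.self_sub_floor, hw]
        push_cast
        ring
      rw [e, abs_mul, abs_of_nonneg (Int.fract_nonneg _)]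
      have := (Int.fract_lt_one ((m : ℝ) * r)).le
      nlinarith [abs_nonneg w]
    obtain ⟨m, m', hne, -, h1, -⟩ := pd_contra ha hb hx hex hpd
      (fun m => -⌊(m : ℝ) * r⌋) (fun m => m) (fun _ => 0)
      (max |y₁| |z₁|) (fun m => (hb' m _ _ hr1).trans (le_max_left _ _))
      (fun m => (hb' m _ _ hr2).trans (le_max_right _ _))
    exact hne h1

theorem rat_of_pd (ha : a ≠ 0) (hb : b ≠ 0) (hx : x₃ ≠ 0) {Γ : Subgroup AffT}
    (hex : ∀ i j k l : ℤ, ∃ γ ∈ Γ, Fm a b y₁ z₁ y₂ z₂ x₃ γ i j k l)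
    (hpd : IsProperlyDiscontinuous Γ) : ∃ q : ℚ, (a * y₂ - b * z₁) / x₃ = (q : ℝ) := by
  obtain ⟨m, m', hne, -, -, k, k', h1⟩ := pd_contra ha hb hx hex hpd
    (fun _ => 0) (fun _ => 0) (fun m => m) 0 (by simp) (by simp)
  refine ⟨((k' : ℚ) - k) / (m - m'), ?_⟩
  have hne' : (m : ℝ) - m' ≠ 0 := by
    rw [sub_ne_zero]
    exact_mod_cast hne
  push_cast
  rw [div_eq_div_iff hx hne']
  linarith

theorem free_of (hD : y₁ * z₂ - y₂ * z₁ ≠ 0) {Γ : Subgroup AffT}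
    (hall : ∀ γ ∈ Γ, ∃ i j k l : ℤ, Fm a b y₁ z₁ y₂ z₂ x₃ γ i j k l) : IsFreeAction Γ := by
  rintro γ hγ ⟨x, hx⟩
  obtain ⟨i, j, k, l, hf⟩ := hall γ hγ
  have e := (hf x).symm.trans hx
  have e0 := congrFun e 0
  have e1 := congrFun e 1
  have e2 := congrFun e 2
  simp at e0 e1 e2
  have hi : i = 0 := by
    have : (i : ℝ) * (y₁ * z₂ - y₂ * z₁) = 0 := by linear_combination z₂ * e1 - y₂ * e2
    simpa [hD] using this
  have hj : j = 0 := by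
    have : (j : ℝ) * (y₁ * z₂ - y₂ * z₁) = 0 := by linear_combination y₁ * e2 - z₁ * e1
    simpa [hD] using this
  subst hi hj
  simp [Qf] at e0
  ext1 v
  rw [hf v]
  have e : (1 : AffT) v = v := rfl
  rw [e]
  apply vec3_ext <;> simp [Qf, e0]

theorem pd_of (hD : y₁ * z₂ - y₂ * z₁ ≠ 0) (hx : x₃ ≠ 0) (q : ℚ)
    (hq : (a * y₂ - b * z₁) / x₃ = (q : ℝ)) {Γ : Subgroup AffT}
    (hall : ∀ γ ∈ Γ, ∃ i j k l : ℤ, Fm a b y₁ z₁ y₂ z₂ x₃ γ i j k l) :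
    IsProperlyDiscontinuous Γ := by
  intro K L hK hL
  obtain ⟨R₁, hR₁⟩ := hK.isBounded.subset_closedBall 0
  obtain ⟨R₂, hR₂⟩ := hL.isBounded.subset_closedBall 0
  have hden : (q.den : ℝ) ≠ 0 := by exact_mod_cast q.den_nz
  set d : ℝ := x₃ / q.den with hd
  have hd0 : d ≠ 0 := div_ne_zero hx hden
  have hG : ∀ γ ∈ Γ, ∃ p : ℤ × ℤ × ℤ, Gm a b y₁ z₁ y₂ z₂ γ p.1 p.2.1 (p.2.2 * d) := by
    intro γ hγ
    obtain ⟨i, j, k, l, hf⟩ := hall γ hγ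
    refine ⟨⟨i, j, k * q.den + l * q.num⟩, ?_⟩
    have e : (k : ℝ) * x₃ + l * (a * y₂ - b * z₁) = ((k * q.den + l * q.num : ℤ) : ℝ) * d := by
      rw [div_eq_iff hx] at hq
      rw [hq, hd]
      have : (q : ℝ) = q.num / q.den := by
        exact_mod_cast (Rat.num_div_den q).symm
      rw [this]
      push_cast
      field_simp
    rw [Fm, e] at hf
    exact hf
  choose! f hf using hG
  set R := R₁ + R₂ with hR
  set D := y₁ * z₂ - y₂ * z₁ with hDd
  set B₁ := (|z₂| * R + |y₂| * R) / |D| with hB₁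
  set B₂ := (|y₁| * R + |z₁| * R) / |D| with hB₂
  let B₃ : ℤ × ℤ → ℝ := fun p =>
    (R + |p.1 * a| * R₁ + |p.2 * b| * R₁ + |Qf a b y₁ y₂ z₂ p.1 p.2|) / |d|
  let T : Set (ℤ × ℤ × ℤ) := ⋃ p ∈ {m : ℤ | |(m : ℝ)| ≤ B₁} ×ˢ {m : ℤ | |(m : ℝ)| ≤ B₂},
    (fun m : ℤ => (p.1, p.2, m)) '' {m : ℤ | |(m : ℝ)| ≤ B₃ p}
  have hT : T.Finite := by
    apply Set.Finite.biUnion ((int_abs_le_finite _).prod (int_abs_le_finite _))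
    intro p _
    exact (int_abs_le_finite _).image _
  refine Set.Finite.of_injOn (f := f) (t := T) ?_ ?_ hT
  · rintro γ ⟨hγ, _, ⟨x, hxK, rfl⟩, hxL⟩
    have hfx := hf γ hγ
    have bx := fun i => abs_coord_le (hR₁ hxK) i
    have bim := fun i => abs_coord_le (hR₂ hxL) i
    have b0 := bim 0
    have b1 := bim 1
    have b2 := bim 2
    rw [hfx x] at b0 b1 b2
    generalize f γ = p at *
    obtain ⟨i, j, m⟩ := p
    simp only [Matrix.cons_val_zero, Matrix.cons_val_one, Matrix.cons_val] at b0 b1 b2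
    have c1 : |(i : ℝ) * y₁ + j * y₂| ≤ R := by
      have := abs_sub (x 1 + (i * y₁ + j * y₂)) (x 1)
      rw [add_sub_cancel_left] at this
      linarith [bx 1]
    have c2 : |(i : ℝ) * z₁ + j * z₂| ≤ R := by
      have := abs_sub (x 2 + (i * z₁ + j * z₂)) (x 2)
      rw [add_sub_cancel_left] at this
      linarith [bx 2]
    have hDp : 0 < |D| := abs_pos.2 hD
    have hdp : 0 < |d| := abs_pos.2 hd0
    refine Set.mem_biUnion (x := (i, j)) ⟨?_, ?_⟩ ⟨m, ?_, rfl⟩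
    · show |(i : ℝ)| ≤ B₁
      rw [hB₁, le_div_iff₀ hDp, ← abs_mul]
      have e : (i : ℝ) * D = z₂ * (i * y₁ + j * y₂) - y₂ * (i * z₁ + j * z₂) := by
        rw [hDd]; ring
      rw [e]
      refine (abs_sub _ _).trans ?_
      rw [abs_mul, abs_mul]
      gcongr
    · show |(j : ℝ)| ≤ B₂
      rw [hB₂, le_div_iff₀ hDp, ← abs_mul]
      have e : (j : ℝ) * D = y₁ * (i * z₁ + j * z₂) - z₁ * (i * y₁ + j * y₂) := by
        rw [hDd]; ring
      rw [e]
      refine (abs_sub _ _).trans ?_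
      rw [abs_mul, abs_mul]
      gcongr
    · show |(m : ℝ)| ≤ B₃ (i, j)
      simp only [B₃]
      rw [le_div_iff₀ hdp, ← abs_mul]
      have u1 : |(i * a) * x 1| ≤ |(i : ℝ) * a| * R₁ := by
        rw [abs_mul]
        exact mul_le_mul_of_nonneg_left (bx 1) (abs_nonneg _)
      have u2 : |(j * b) * x 2| ≤ |(j : ℝ) * b| * R₁ := by
        rw [abs_mul]
        exact mul_le_mul_of_nonneg_left (bx 2) (abs_nonneg _)
      have u0 := bx 0
      have u3 := le_refl |Qf a b y₁ y₂ z₂ i j|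
      generalize |(i : ℝ) * a| * R₁ = U1 at *
      generalize |(j : ℝ) * b| * R₁ = U2 at *
      generalize hU3 : |Qf a b y₁ y₂ z₂ i j| = U3 at *
      rw [← hU3] at u3
      rw [hU3] at u3
      have u3' := abs_le.1 hU3.le
      rw [abs_le] at *
      constructor <;> linarith
  · rintro γ ⟨hγ, -⟩ δ ⟨hδ, -⟩ he
    have h1 := hf γ hγ
    have h2 := hf δ hδ
    rw [he] at h1
    exact Gm_unique h1 h2

theorem compact_of (hD : y₁ * z₂ - y₂ * z₁ ≠ 0) (hx : x₃ ≠ 0) {Γ : Subgroup AffT}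
    (hex : ∀ i j k l : ℤ, ∃ γ ∈ Γ, Fm a b y₁ z₁ y₂ z₂ x₃ γ i j k l) :
    HasCompactQuotient Γ := by
  let C := |x₃| + (|y₁| + |y₂|) + (|z₁| + |z₂|)
  have hK : IsCompact (Metric.closedBall (0 : E3) C) := isCompact_closedBall _ _
  have himg := hK.image (f := (Quotient.mk (orbitSetoid Γ) : E3 → Quotient (orbitSetoid Γ)))
    continuous_quotient_mk'
  refine ⟨?_⟩
  convert himg
  symm
  rw [Set.eq_univ_iff_forall]
  intro w
  induction w using Quotient.inductionOn with
  | h v =>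
  let α := (v 1 * z₂ - v 2 * y₂) / (y₁ * z₂ - y₂ * z₁)
  let β := (y₁ * v 2 - z₁ * v 1) / (y₁ * z₂ - y₂ * z₁)
  let i : ℤ := -⌊α⌋
  let j : ℤ := -⌊β⌋
  let s := v 0 + i * a * v 1 + j * b * v 2 + Qf a b y₁ y₂ z₂ i j
  obtain ⟨γ, hγ, hf⟩ := hex i j (-⌊s / x₃⌋) 0
  refine ⟨γ v, ?_, Quotient.sound ((orbitSetoid Γ).symm ⟨γ, hγ, rfl⟩)⟩
  have e1 : v 1 = α * y₁ + β * y₂ := by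
    have p1 : α * (y₁ * z₂ - y₂ * z₁) = v 1 * z₂ - v 2 * y₂ := div_mul_cancel₀ _ hD
    have p2 : β * (y₁ * z₂ - y₂ * z₁) = y₁ * v 2 - z₁ * v 1 := div_mul_cancel₀ _ hD
    apply mul_right_cancel₀ hD
    linear_combination -y₁ * p1 - y₂ * p2
  have e2 : v 2 = α * z₁ + β * z₂ := by
    have p1 : α * (y₁ * z₂ - y₂ * z₁) = v 1 * z₂ - v 2 * y₂ := div_mul_cancel₀ _ hD
    have p2 : β * (y₁ * z₂ - y₂ * z₁) = y₁ * v 2 - z₁ * v 1 := div_mul_cancel₀ _ hD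
    apply mul_right_cancel₀ hD
    linear_combination -z₁ * p1 - z₂ * p2
  have fr : ∀ p r : ℝ, |Int.fract α * p + Int.fract β * r| ≤ |p| + |r| := by
    intro p r
    refine (abs_add_le _ _).trans ?_
    rw [abs_mul, abs_mul, abs_of_nonneg (Int.fract_nonneg α),
      abs_of_nonneg (Int.fract_nonneg β)]
    nlinarith [abs_nonneg p, abs_nonneg r, Int.fract_lt_one α, Int.fract_lt_one β]
  have n1 := abs_nonneg x₃
  have n2 := abs_nonneg y₁
  have n3 := abs_nonneg y₂
  have n4 := abs_nonneg z₁
  have n5 := abs_nonneg z₂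
  rw [hf v]
  apply mem_ball_of
  · have h := floor_red hx s
    have e : s + ((-⌊s / x₃⌋ : ℤ) : ℝ) * x₃ = v 0 + i * a * v 1 + j * b * v 2 +
      (Qf a b y₁ y₂ z₂ i j + (((-⌊s / x₃⌋ : ℤ) : ℝ) * x₃ + ((0 : ℤ) : ℝ) * (a * y₂ - b * z₁))) := by
      simp only [s]
      push_cast
      ring
    rw [e] at h
    simp only [Matrix.cons_val_zero]
    refine h.trans ?_
    simp only [C]
    linarith
  · have h := fr y₁ y₂
    have e : Int.fract α * y₁ + Int.fract β * y₂ = v 1 + (i * y₁ + j * y₂) := by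
      rw [e1, ← Int.self_sub_floor, ← Int.self_sub_floor]
      simp only [i, j]
      push_cast
      ring
    rw [e] at h
    simp only [Matrix.cons_val_one, Matrix.cons_val]
    refine h.trans ?_
    simp only [C]
    linarith
  · have h := fr z₁ z₂
    have e : Int.fract α * z₁ + Int.fract β * z₂ = v 2 + (i * z₁ + j * z₂) := by
      rw [e2, ← Int.self_sub_floor, ← Int.self_sub_floor]
      simp only [i, j]
      push_cast
      ring
    rw [e] at h
    simp only [Matrix.cons_val]
    refine h.trans ?_
    simp only [C]
    linarith

theorem linind_iff (hx : x₃ ≠ 0) :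
    LinearIndependent ℝ ![(![0, y₁, z₁] : E3), ![0, y₂, z₂], ![x₃, 0, 0]] ↔
      y₁ * z₂ - y₂ * z₁ ≠ 0 := by
  have h := Matrix.linearIndependent_rows_iff_isUnit
    (A := (!![0, y₁, z₁; 0, y₂, z₂; x₃, 0, 0] : Matrix (Fin 3) (Fin 3) ℝ))
  have e : (!![0, y₁, z₁; 0, y₂, z₂; x₃, 0, 0] : Matrix (Fin 3) (Fin 3) ℝ).row =
    ![(![0, y₁, z₁] : E3), ![0, y₂, z₂], ![x₃, 0, 0]] := rfl
  rw [e] at h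
  rw [h, Matrix.isUnit_iff_isUnit_det, isUnit_iff_ne_zero, Matrix.det_fin_three]
  have e2 : (!![0, y₁, z₁; 0, y₂, z₂; x₃, 0, 0] : Matrix (Fin 3) (Fin 3) ℝ).det =
    x₃ * (y₁ * z₂ - y₂ * z₁) := by
    rw [Matrix.det_fin_three]
    simp
    ring
  rw [← Matrix.det_fin_three, e2]
  simp [hx]

end nf

/-- rank-one translation subgroup, `c = 0` case. -/
theorem stmt_10 (a₁ : ℤ) (ha₁ : a₁ ≠ 0) (n : ℕ) (hn : 0 < n)
    (y₁ z₁ y₂ z₂ x₃ : ℝ) (hx₃ : x₃ ≠ 0)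
    (g h t : AffT)
    (hg : HasForm g !![1, (a₁ : ℝ), 0; 0, 1, 0; 0, 0, 1] ![0, y₁, z₁])
    (hh : HasForm h !![1, 0, (n : ℝ) * (a₁ : ℝ); 0, 1, 0; 0, 0, 1] ![0, y₂, z₂])
    (ht : IsTranslationBy t ![x₃, 0, 0])
    (Γ : Subgroup AffT) (hΓ : Γ = Subgroup.closure {g, h, t})
    (hrk : ∀ γ ∈ Γ, ∀ w : E3, IsTranslationBy γ w → ∃ r : ℝ, w = r • ![x₃, 0, 0]) :
    ((IsFreeAction Γ ∧ IsProperlyDiscontinuous Γ) ↔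
      (LinearIndependent ℝ ![![0, y₁, z₁], ![0, y₂, z₂], ![x₃, 0, 0]] ∧
        ∃ q : ℚ, ((a₁ : ℝ) * y₂ - (n : ℝ) * (a₁ : ℝ) * z₁) / x₃ = (q : ℝ))) ∧
    (IsFreeAction Γ ∧ IsProperlyDiscontinuous Γ → HasCompactQuotient Γ) := by
  have ha : (a₁ : ℝ) ≠ 0 := by exact_mod_cast ha₁
  have hb : (n : ℝ) * (a₁ : ℝ) ≠ 0 := mul_ne_zero (by exact_mod_cast hn.ne') ha
  have fg : Fm a₁ (n * a₁) y₁ z₁ y₂ z₂ x₃ g 1 0 0 0 := by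
    intro x
    rw [hg x]
    apply vec3_ext <;> simp [Qf, Matrix.mulVec, dotProduct, Fin.sum_univ_three]
  have fh : Fm a₁ (n * a₁) y₁ z₁ y₂ z₂ x₃ h 0 1 0 0 := by
    intro x
    rw [hh x]
    apply vec3_ext <;> simp [Qf, Matrix.mulVec, dotProduct, Fin.sum_univ_three]
  have ft : Fm a₁ (n * a₁) y₁ z₁ y₂ z₂ x₃ t 0 0 1 0 := by
    intro x
    rw [ht x]
    apply vec3_ext <;> simp [Qf]
  have mg : g ∈ Γ := hΓ ▸ Subgroup.subset_closure (by simp)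
  have mh : h ∈ Γ := hΓ ▸ Subgroup.subset_closure (by simp)
  have mt : t ∈ Γ := hΓ ▸ Subgroup.subset_closure (by simp)
  have hex := Fm_exists mg mh mt fg fh ft
  have hall : ∀ γ ∈ Γ, ∃ i j k l : ℤ, Fm a₁ (n * a₁) y₁ z₁ y₂ z₂ x₃ γ i j k l := by
    intro γ hγ
    rw [hΓ] at hγ
    induction hγ using Subgroup.closure_induction with
    | mem u hu =>
      simp only [Set.mem_insert_iff, Set.mem_singleton_iff] at hu
      rcases hu with rfl | rfl | rfl
      · exact ⟨_, _, _, _, fg⟩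
      · exact ⟨_, _, _, _, fh⟩
      · exact ⟨_, _, _, _, ft⟩
    | one => exact ⟨_, _, _, _, Fm_one⟩
    | mul u v _ _ hu hv =>
      obtain ⟨_, _, _, _, f1⟩ := hu
      obtain ⟨_, _, _, _, f2⟩ := hv
      exact ⟨_, _, _, _, Fm_mul f1 f2⟩
    | inv u _ hu =>
      obtain ⟨_, _, _, _, f1⟩ := hu
      exact ⟨_, _, _, _, Fm_inv f1⟩
  rw [linind_iff hx₃]
  refine ⟨⟨?_, ?_⟩, ?_⟩
  · rintro ⟨-, hpd⟩
    exact ⟨det_ne_of_pd ha hb hx₃ hex hpd, rat_of_pd ha hb hx₃ hex hpd⟩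
  · rintro ⟨hD, q, hq⟩
    exact ⟨free_of hD hall, pd_of hD hx₃ q hq hall⟩
  · rintro ⟨-, hpd⟩
    exact compact_of (det_ne_of_pd ha hb hx₃ hex hpd) hx₃ hex
end
end

section
/- Let Γ be a group of affine transformations of ℝ³ such that the linear part of every element of Γ is an integer upper unitriangular matrix (an upper triangular integer matrix with all diagonal entries equal to 1). If Γ acts freely and properly discontinuously on ℝ³ and the orbit space ℝ³/Γ is compact, then Γ contains a pure translation different from the identity. -/
open Matrix

noncomputable section

/-- Explicit coordinate form of an affine map with unitriangular integer linear part. -/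
def PForm (γ : AffT) (a b c : ℤ) (u v w : ℝ) : Prop :=
  ∀ x : E3, γ x 0 = x 0 + a * x 1 + b * x 2 + u ∧ γ x 1 = x 1 + c * x 2 + v ∧ γ x 2 = x 2 + w

lemma PForm.of_hasForm {γ : AffT} {a b c : ℤ} {v : E3}
    (h : HasForm γ !![1, (a : ℝ), (b : ℝ); 0, 1, (c : ℝ); 0, 0, 1] v) :
    PForm γ a b c (v 0) (v 1) (v 2) := by
  intro x
  rw [h x]
  simp [Matrix.mulVec, dotProduct, Fin.sum_univ_three]

lemma PForm.mul {g h : AffT} {a b c a' b' c' : ℤ} {u v w u' v' w' : ℝ}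
    (hg : PForm g a b c u v w) (hh : PForm h a' b' c' u' v' w') :
    PForm (g * h) (a + a') (b + b' + a * c') (c + c') (u + u' + a * v' + b * w')
      (v + v' + c * w') (w + w') := by
  intro x
  obtain ⟨h0, h1, h2⟩ := hh x
  obtain ⟨g0, g1, g2⟩ := hg (h x)
  have e : (g * h) x = g (h x) := rfl
  rw [e, g0, g1, g2, h0, h1, h2]
  push_cast
  refine ⟨by ring, by ring, by ring⟩

lemma PForm.unique {g : AffT} {a b c a' b' c' : ℤ} {u v w u' v' w' : ℝ}
    (hg : PForm g a b c u v w) (hh : PForm g a' b' c' u' v' w') :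
    a = a' ∧ b = b' ∧ c = c' ∧ u = u' ∧ v = v' ∧ w = w' := by
  have p := hg ![0, 0, 0]
  have p' := hh ![0, 0, 0]
  have q := hg ![0, 1, 0]
  have q' := hh ![0, 1, 0]
  have r := hg ![0, 0, 1]
  have r' := hh ![0, 0, 1]
  simp at p p' q q' r r'
  obtain ⟨p0, p1, p2⟩ := p
  obtain ⟨p0', p1', p2'⟩ := p'
  obtain ⟨q0, q1, q2⟩ := q
  obtain ⟨q0', q1', q2'⟩ := q'
  obtain ⟨r0, r1, r2⟩ := r
  obtain ⟨r0', r1', r2'⟩ := r'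
  have hu : u = u' := by linarith
  have hv : v = v' := by linarith
  refine ⟨?_, ?_, ?_, hu, hv, by linarith⟩
  · have : (a : ℝ) = a' := by linarith
    exact_mod_cast this
  · have : (b : ℝ) = b' := by linarith
    exact_mod_cast this
  · have : (c : ℝ) = c' := by linarith
    exact_mod_cast this

/-- A compact quotient gives a bounded set meeting every orbit. -/
lemma exists_bound (Γ : Subgroup AffT) (hcomp : HasCompactQuotient Γ) :
    ∃ R : ℝ, ∀ x : E3, ∃ γ ∈ Γ, ∃ k : E3, (∀ i, |k i| ≤ R) ∧ γ k = x := by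
  haveI : CompactSpace (Quotient (orbitSetoid Γ)) := hcomp
  let π : E3 → Quotient (orbitSetoid Γ) := Quotient.mk (orbitSetoid Γ)
  let U : ℕ → Set (Quotient (orbitSetoid Γ)) := fun n => π '' Metric.ball 0 n
  have hU : ∀ n, IsOpen (U n) := by
    intro n
    have : IsOpen (π ⁻¹' U n) := by
      have e : π ⁻¹' U n = ⋃ γ ∈ Γ, (γ : E3 → E3) ⁻¹' Metric.ball 0 n := by
        ext x
        simp only [Set.mem_preimage, Set.mem_iUnion, U, Set.mem_image]
        constructor
        · rintro ⟨y, hy, hyx⟩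
          obtain ⟨γ, hγ, h⟩ := (orbitSetoid Γ).symm (Quotient.exact hyx)
          exact ⟨γ, hγ, by rw [h]; exact hy⟩
        · rintro ⟨γ, hγ, h⟩
          refine ⟨γ x, h, ?_⟩
          exact Quotient.sound ((orbitSetoid Γ).symm ⟨γ, hγ, rfl⟩)
      rw [e]
      refine isOpen_biUnion fun γ _ => ?_
      exact Metric.isOpen_ball.preimage (AffineMap.continuous_of_finiteDimensional (γ : E3 →ᵃ[ℝ] E3))
    exact this
  obtain ⟨n, hn⟩ := isCompact_univ.elim_directed_cover U hU (by
    intro q _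
    obtain ⟨x, rfl⟩ := Quotient.exists_rep q
    obtain ⟨n, hn⟩ := exists_nat_gt ‖x‖
    exact Set.mem_iUnion.2 ⟨n, x, by simpa using hn, rfl⟩) (by
    refine Monotone.directed_le ?_
    intro m n hmn
    exact Set.image_mono (Metric.ball_subset_ball (by exact_mod_cast hmn)))
  refine ⟨n, fun x => ?_⟩
  obtain ⟨k, hk, hkx⟩ := hn (Set.mem_univ (π x))
  obtain ⟨γ, hγ, h⟩ := Quotient.exact hkx
  refine ⟨γ, hγ, k, fun i => ?_, h⟩
  have h1 : ‖k‖ < n := by simpa using hk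
  exact (norm_le_pi_norm k i).trans h1.le

lemma int_bdd_finite (M : ℝ) : {n : ℤ | |(n : ℝ)| ≤ M}.Finite := by
  refine (Set.finite_Icc (-⌈M⌉) ⌈M⌉).subset ?_
  intro n hn
  have h := abs_le.1 (show |(n : ℝ)| ≤ M from hn)
  have := Int.le_ceil M
  constructor
  · have : ((-⌈M⌉ : ℤ) : ℝ) ≤ n := by push_cast; linarith
    exact_mod_cast this
  · have : (n : ℝ) ≤ ((⌈M⌉ : ℤ) : ℝ) := by linarith
    exact_mod_cast this

theorem stmt_12 (Γ : Subgroup AffT)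
    (hlin : ∀ γ ∈ Γ, ∃ (a b c : ℤ) (v : E3),
      HasForm γ !![1, (a : ℝ), (b : ℝ); 0, 1, (c : ℝ); 0, 0, 1] v)
    (hfree : IsFreeAction Γ) (hpd : IsProperlyDiscontinuous Γ)
    (hcomp : HasCompactQuotient Γ) :
    ∃ γ ∈ Γ, γ ≠ 1 ∧ ∃ v : E3, IsTranslationBy γ v := by
  by_contra hno
  have hnt : ∀ γ ∈ Γ, (∃ v : E3, IsTranslationBy γ v) → γ = 1 := by
    intro γ hγ hv
    by_contra h1
    exact hno ⟨γ, hγ, h1, hv⟩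
  have hP : ∀ γ : AffT, ∃ (a b c : ℤ) (u v w : ℝ), γ ∈ Γ → PForm γ a b c u v w := by
    intro γ
    by_cases hγ : γ ∈ Γ
    · obtain ⟨a, b, c, v, h⟩ := hlin γ hγ
      exact ⟨a, b, c, v 0, v 1, v 2, fun _ => PForm.of_hasForm h⟩
    · exact ⟨0, 0, 0, 0, 0, 0, fun h => absurd h hγ⟩
  choose a b c u v w hF using hP
  -- an element is determined by its linear part
  have hinj : ∀ g ∈ Γ, ∀ h ∈ Γ, a g = a h → b g = b h → c g = c h → g = h := by
    intro g hg h hh ea eb ec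
    have : g * h⁻¹ = 1 := by
      refine hnt _ (Γ.mul_mem hg (Γ.inv_mem hh)) ⟨![u g - u h, v g - v h, w g - w h], ?_⟩
      intro x
      have e1 : (g * h⁻¹) x = g (h⁻¹ x) := rfl
      have e2 : h (h⁻¹ x) = x := h.apply_symm_apply x
      obtain ⟨p0, p1, p2⟩ := hF g hg (h⁻¹ x)
      obtain ⟨q0, q1, q2⟩ := hF h hh (h⁻¹ x)
      rw [e2] at q0 q1 q2
      rw [e1]
      rw [ea, eb] at p0
      rw [ec] at p1
      ext i
      fin_cases i
      · simp; linarith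
      · simp; linarith
      · simp; linarith
    exact mul_inv_eq_one.1 this
  have hmul : ∀ g ∈ Γ, ∀ h ∈ Γ, a (g * h) = a g + a h ∧ b (g * h) = b g + b h + a g * c h ∧
      c (g * h) = c g + c h ∧ u (g * h) = u g + u h + a g * v h + b g * w h ∧
      v (g * h) = v g + v h + c g * w h ∧ w (g * h) = w g + w h := by
    intro g hg h hh
    exact (hF _ (Γ.mul_mem hg hh)).unique ((hF g hg).mul (hF h hh))
  -- commuting linear parts give commuting elements
  have hcomm : ∀ g ∈ Γ, ∀ h ∈ Γ, a g * c h = a h * c g →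
      a g * v h + b g * w h = a h * v g + b h * w g ∧ c g * w h = c h * w g := by
    intro g hg h hh e
    obtain ⟨p1, p2, p3, p4, p5, p6⟩ := hmul g hg h hh
    obtain ⟨q1, q2, q3, q4, q5, q6⟩ := hmul h hh g hg
    have key : g * h = h * g := hinj _ (Γ.mul_mem hg hh) _ (Γ.mul_mem hh hg)
      (by rw [p1, q1]; ring) (by rw [p2, q2, e]; ring) (by rw [p3, q3]; ring)
    rw [key, q4] at p4
    rw [key, q5] at p5
    exact ⟨by linarith, by linarith⟩
  -- linear parts commute
  have hab : ∀ g ∈ Γ, ∀ h ∈ Γ, a g * c h = a h * c g := by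
    intro g hg h hh
    by_contra hne
    obtain ⟨t, htdef⟩ : ∃ t, t = g * h * (h * g)⁻¹ := ⟨_, rfl⟩
    have ht : t ∈ Γ := by
      rw [htdef]; exact Γ.mul_mem (Γ.mul_mem hg hh) (Γ.inv_mem (Γ.mul_mem hh hg))
    have hteq : t * (h * g) = g * h := by rw [htdef]; group
    obtain ⟨p1, p2, p3, p4, p5, p6⟩ := hmul g hg h hh
    obtain ⟨q1, q2, q3, q4, q5, q6⟩ := hmul h hh g hg
    obtain ⟨r1, r2, r3, r4, r5, r6⟩ := hmul t ht (h * g) (Γ.mul_mem hh hg)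
    rw [hteq] at r1 r2 r3 r4 r5 r6
    have ta : a t = 0 := by linarith
    have tc : c t = 0 := by linarith
    have tw : w t = 0 := by linarith
    have tb : b t = a g * c h - a h * c g := by
      rw [ta] at r2; linarith
    have tv : v t = c g * w h - c h * w g := by
      rw [tc] at r5; push_cast at r5; linarith
    have tb0 : b t ≠ 0 := by rw [tb]; exact sub_ne_zero.2 hne
    have tbR : (b t : ℝ) ≠ 0 := by exact_mod_cast tb0
    have tg := (hcomm t ht g hg (by rw [ta, tc]; ring)).1
    have th := (hcomm t ht h hh (by rw [ta, tc]; ring)).1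
    rw [ta, tw] at tg th
    push_cast at tg th
    have tbR' : (b t : ℝ) = a g * c h - a h * c g := by exact_mod_cast tb
    have hbv : (b t : ℝ) * v t = 0 := by
      have : (b t : ℝ) * v t = -(b t * v t) := by
        calc (b t : ℝ) * v t = c g * (b t * w h) - c h * (b t * w g) := by rw [tv]; ring
          _ = c g * (a h * v t) - c h * (a g * v t) := by
            rw [show (b t : ℝ) * w h = a h * v t by linarith,
              show (b t : ℝ) * w g = a g * v t by linarith]
          _ = -(b t * v t) := by rw [tbR']; ring
      linarith
    have tv0 : v t = 0 := (mul_eq_zero.1 hbv).resolve_left tbR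
    have t1 : t = 1 := by
      refine hfree t ht ⟨![0, 0, -(u t) / b t], ?_⟩
      obtain ⟨f0, f1, f2⟩ := hF t ht ![0, 0, -(u t) / b t]
      rw [ta] at f0
      rw [tc, tv0] at f1
      rw [tw] at f2
      ext i
      fin_cases i
      · simp at f0 ⊢
        rw [f0]; field_simp; ring
      · simpa using f1
      · simpa using f2
    have hgh := hmul 1 Γ.one_mem 1 Γ.one_mem
    rw [mul_one] at hgh
    rw [t1] at tb0 ta
    apply tb0
    have := hgh.2.1
    rw [ta] at this
    linarith
  obtain ⟨R, hR⟩ := exists_bound Γ hcomp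
  have hR0 : 0 ≤ R := by
    obtain ⟨_, _, k, hk, _⟩ := hR 0
    exact (abs_nonneg _).trans (hk 0)
  -- it suffices to bound linear parts
  have hbound : ∀ M : ℝ, (∀ g ∈ Γ, ∀ s : ℝ, |w g| ≤ R → |s| ≤ R → |v g + c g * s| ≤ R →
      |(a g : ℝ)| ≤ M ∧ |(b g : ℝ)| ≤ M ∧ |(c g : ℝ)| ≤ M) → False := by
    intro M hM
    let S : Set AffT := {g | g ∈ Γ ∧ |(a g : ℝ)| ≤ M ∧ |(b g : ℝ)| ≤ M ∧ |(c g : ℝ)| ≤ M}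
    have hS : S.Finite := by
      have hfin := (int_bdd_finite M).prod ((int_bdd_finite M).prod (int_bdd_finite M))
      refine Set.Finite.of_finite_image (f := fun g => (a g, b g, c g)) (hfin.subset ?_) ?_
      · rintro _ ⟨g, hg, rfl⟩
        exact ⟨hg.2.1, hg.2.2.1, hg.2.2.2⟩
      · intro g hg h hh e
        simp only [Prod.mk.injEq] at e
        exact hinj g hg.1 h hh.1 e.1 e.2.1 e.2.2
    obtain ⟨B, hB⟩ := (hS.image u).bddAbove
    obtain ⟨γ, hγ, k, hk, hkx⟩ := hR ![R + |M| * R + |M| * R + B + 1, 0, 0]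
    obtain ⟨f0, f1, f2⟩ := hF γ hγ k
    rw [hkx] at f0 f1 f2
    simp at f0 f1 f2
    have h1 : |w γ| ≤ R := by
      have : w γ = -k 2 := by linarith
      rw [this, abs_neg]; exact hk 2
    have h2 : |v γ + c γ * k 2| ≤ R := by
      have : v γ + c γ * k 2 = -k 1 := by linarith
      rw [this, abs_neg]; exact hk 1
    obtain ⟨m1, m2, m3⟩ := hM γ hγ (k 2) h1 (hk 2) h2
    have hu : u γ ≤ B := hB ⟨γ, ⟨hγ, m1, m2, m3⟩, rfl⟩
    have e1 : (a γ : ℝ) * k 1 ≤ |M| * R := (le_abs_self _).trans (by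
      rw [abs_mul]
      exact mul_le_mul (m1.trans (le_abs_self _)) (hk 1) (abs_nonneg _) (abs_nonneg _))
    have e2 : (b γ : ℝ) * k 2 ≤ |M| * R := (le_abs_self _).trans (by
      rw [abs_mul]
      exact mul_le_mul (m2.trans (le_abs_self _)) (hk 2) (abs_nonneg _) (abs_nonneg _))
    have e3 := (le_abs_self _).trans (hk 0)
    linarith
  -- some element moves z
  obtain ⟨g0, hg0, hw0⟩ : ∃ g ∈ Γ, w g ≠ 0 := by
    by_contra! hcon
    obtain ⟨γ, hγ, k, hk, hkx⟩ := hR ![0, 0, R + 1]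
    obtain ⟨f0, f1, f2⟩ := hF γ hγ k
    rw [hkx, hcon γ hγ] at f2
    simp at f2
    have := (le_abs_self _).trans (hk 2)
    linarith
  by_cases hc : ∃ g ∈ Γ, c g ≠ 0
  · obtain ⟨g, hg, hcg⟩ := hc
    have hcR : (c g : ℝ) ≠ 0 := by exact_mod_cast hcg
    have hwc : ∀ h ∈ Γ, c g * w h = c h * w g := fun h hh => (hcomm g hg h hh (hab g hg h hh)).2
    have hwg : w g ≠ 0 := by
      intro h0
      have := hwc g0 hg0
      rw [h0, mul_zero] at this
      exact (mul_ne_zero hcR hw0) this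
    have hw' : 0 < |w g| := abs_pos.2 hwg
    have hc' : 0 < |(c g : ℝ)| := abs_pos.2 hcR
    let C := |(c g : ℝ)| * R / |w g|
    let A := |(a g : ℝ)| * C / |(c g : ℝ)|
    let V := R + C * R
    let B := (|(a g : ℝ)| * V + |(b g : ℝ)| * R + A * |v g|) / |w g|
    have hC0 : 0 ≤ C := by positivity
    have hA0 : 0 ≤ A := by positivity
    have hB0 : 0 ≤ B := by positivity
    refine hbound (A + B + C) ?_
    intro h hh s hws hs hvs
    have bC : |(c h : ℝ)| ≤ C := by
      rw [le_div_iff₀ hw', ← abs_mul, ← hwc h hh, abs_mul]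
      gcongr
    have bA : |(a h : ℝ)| ≤ A := by
      have e : (a h : ℝ) * c g = a g * c h := by exact_mod_cast (hab g hg h hh).symm
      rw [le_div_iff₀ hc', ← abs_mul, e, abs_mul]
      gcongr
    have bV : |v h| ≤ V := by
      have e : v h = (v h + c h * s) - c h * s := by ring
      rw [e]
      refine (abs_sub _ _).trans ?_
      rw [abs_mul]
      have : |(c h : ℝ)| * |s| ≤ C * R := by gcongr
      linarith
    have bB : |(b h : ℝ)| ≤ B := by
      have e : (b h : ℝ) * w g = a g * v h + b g * w h - a h * v g := by
        linarith [(hcomm g hg h hh (hab g hg h hh)).1]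
      rw [le_div_iff₀ hw', ← abs_mul, e]
      refine (abs_sub _ _).trans ?_
      refine add_le_add ((abs_add_le _ _).trans (add_le_add ?_ ?_)) ?_ <;> rw [abs_mul] <;> gcongr
    exact ⟨by linarith, by linarith, by linarith⟩
  · push Not at hc
    have hcc : ∀ g ∈ Γ, ∀ h ∈ Γ, a g * v h + b g * w h = a h * v g + b h * w g :=
      fun g hg h hh => (hcomm g hg h hh (hab g hg h hh)).1
    obtain ⟨g, hg, hdet⟩ : ∃ g ∈ Γ, v g * w g0 - v g0 * w g ≠ 0 := by
      by_contra! hcon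
      obtain ⟨γ, hγ, k, hk, hkx⟩ := hR ![0, (|w g0| * R + |v g0| * R + 1) / w g0, 0]
      obtain ⟨f0, f1, f2⟩ := hF γ hγ k
      rw [hkx, hc γ hγ] at f1
      rw [hkx] at f2
      simp at f1 f2
      have e := hcon γ hγ
      have e1 : |w g0| * R + |v g0| * R + 1 = w g0 * k 1 - v g0 * k 2 := by
        have e2 : |w g0| * R + |v g0| * R + 1 = w g0 * (k 1 + v γ) := by
          rw [← f1]; field_simp
        have e3 : w γ = - k 2 := by linarith
        rw [e3] at e
        linarith
      have e4 : |w g0 * k 1 - v g0 * k 2| ≤ |w g0| * R + |v g0| * R := by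
        refine (abs_sub _ _).trans ?_
        rw [abs_mul, abs_mul]
        have := hk 1
        have := hk 2
        gcongr <;> assumption
      have := (le_abs_self _).trans e4
      linarith
    have hd' : 0 < |v g * w g0 - v g0 * w g| := abs_pos.2 hdet
    let p := |(a g : ℝ)| * R + |(b g : ℝ)| * R
    let q := |(a g0 : ℝ)| * R + |(b g0 : ℝ)| * R
    let A := (p * |w g0| + q * |w g|) / |v g * w g0 - v g0 * w g|
    let B := (q * |v g| + p * |v g0|) / |v g * w g0 - v g0 * w g|
    have hA0 : 0 ≤ A := by positivity
    have hB0 : 0 ≤ B := by positivity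
    refine hbound (A + B) ?_
    intro h hh s hws hs hvs
    rw [hc h hh] at hvs
    have hv : |v h| ≤ R := by simpa using hvs
    have bp : |a g * v h + b g * w h| ≤ p := by
      refine (abs_add_le _ _).trans (add_le_add ?_ ?_) <;> rw [abs_mul] <;> gcongr
    have bq : |a g0 * v h + b g0 * w h| ≤ q := by
      refine (abs_add_le _ _).trans (add_le_add ?_ ?_) <;> rw [abs_mul] <;> gcongr
    have e1 := hcc g hg h hh
    have e2 := hcc g0 hg0 h hh
    have bA : |(a h : ℝ)| ≤ A := by
      have e : (a h : ℝ) * (v g * w g0 - v g0 * w g)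
          = (a g * v h + b g * w h) * w g0 - (a g0 * v h + b g0 * w h) * w g := by
        rw [e1, e2]; ring
      rw [le_div_iff₀ hd', ← abs_mul, e]
      refine (abs_sub _ _).trans (add_le_add ?_ ?_) <;> rw [abs_mul] <;> gcongr
    have bB : |(b h : ℝ)| ≤ B := by
      have e : (b h : ℝ) * (v g * w g0 - v g0 * w g)
          = (a g0 * v h + b g0 * w h) * v g - (a g * v h + b g * w h) * v g0 := by
        rw [e1, e2]; ring
      rw [le_div_iff₀ hd', ← abs_mul, e]
      refine (abs_sub _ _).trans (add_le_add ?_ ?_) <;> rw [abs_mul] <;> gcongr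
    refine ⟨by linarith, by linarith, ?_⟩
    rw [hc h hh]
    simpa using add_nonneg hA0 hB0
end
end

section
/- Let Γ be a group of affine transformations of ℝ³ such that the linear part of every element of Γ is an integer upper unitriangular matrix (an upper triangular integer matrix with all diagonal entries equal to 1), and suppose Γ acts freely and properly discontinuously on ℝ³ with compact orbit space ℝ³/Γ. Let T be the translation subgroup of Γ (the subgroup of pure translations belonging to Γ), and assume the vector parts of the elements of T span a 2-dimensional subspace of ℝ³. Then there exists g ∈ Γ such that Γ is generated by T together with g. -/
open Matrix

noncomputable section

lemma aff_mul_apply (γ δ : AffT) (x : E3) : (γ * δ) x = γ (δ x) := rfl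

lemma aff_apply (γ : AffT) (x : E3) : γ x = γ.linear x + γ 0 := by
  have := γ.map_vadd 0 x
  simpa using this

lemma pow_unip {R : Type*} [Ring R] [Algebra ℝ R] (A : R) (h : (A - 1) ^ 3 = 0) (k : ℕ) :
    ∃ c : ℝ, A ^ k = 1 + (k : ℝ) • (A - 1) + c • (A - 1) ^ 2 := by
  induction k with
  | zero => exact ⟨0, by simp⟩
  | succ k ih =>
    obtain ⟨c, hc⟩ := ih
    refine ⟨c + k, ?_⟩
    have hA : A = 1 + (A - 1) := by abel
    generalize A - 1 = N at *
    subst hA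
    have h3 : N ^ 2 * N = 0 := by rw [← pow_succ]; exact h
    rw [pow_succ, hc]
    simp only [mul_add, add_mul, mul_one, one_mul, smul_mul_assoc, h3, smul_zero, ← pow_two]
    push_cast
    module

lemma unip_torsion {R : Type*} [Ring R] [Algebra ℝ R] (A : R) (h : (A - 1) ^ 3 = 0) (k : ℕ)
    (hk : 0 < k) (h1 : A ^ k = 1) : A = 1 := by
  obtain ⟨c, hc⟩ := pow_unip A h k
  rw [h1] at hc
  have hk' : (k : ℝ) ≠ 0 := by positivity
  have e : (k : ℝ) • (A - 1) + c • (A - 1) ^ 2 = 0 := by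
    have := sub_eq_zero.2 hc.symm
    rw [add_assoc, add_sub_cancel_left] at this
    exact this
  rw [← sub_eq_zero]
  generalize A - 1 = N at *
  have h3 : N ^ 2 * N = 0 := by rw [← pow_succ]; exact h
  have e2 : (k : ℝ) • N ^ 2 = 0 := by
    have := congrArg (· * N) e
    simpa [add_mul, h3, ← pow_two] using this
  have e3 : N ^ 2 = 0 := (smul_eq_zero.1 e2).resolve_left hk'
  rw [e3, smul_zero, add_zero] at e
  exact (smul_eq_zero.1 e).resolve_left hk'

/-- The linear part as an endomorphism. -/
def linEnd : AffT →* Module.End ℝ E3 where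
  toFun γ := (γ.linear : E3 →ₗ[ℝ] E3)
  map_one' := rfl
  map_mul' _ _ := rfl

lemma linEnd_apply (γ : AffT) (x : E3) : linEnd γ x = γ.linear x := rfl

lemma linEnd_unip (γ : AffT) (a b c : ℝ) (v : E3)
    (h : HasForm γ !![1, a, b; 0, 1, c; 0, 0, 1] v) : (linEnd γ - 1) ^ 3 = 0 := by
  have h0 : γ 0 = v := by rw [h 0]; simp
  have hl : ∀ x, (linEnd γ - 1) x = ![a * x 1 + b * x 2, c * x 2, 0] := by
    intro x
    have h1 := h x
    rw [aff_apply, h0] at h1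
    have h2 := add_right_cancel h1
    rw [LinearMap.sub_apply, linEnd_apply, h2]
    ext i
    fin_cases i <;> simp [Matrix.mulVec, dotProduct, Fin.sum_univ_three] <;> ring
  refine LinearMap.ext fun x => ?_
  rw [pow_succ, pow_two]
  simp only [Module.End.mul_apply, hl]
  ext i
  fin_cases i <;> simp

lemma span_near (S : AddSubgroup E3) :
    ∃ C : ℝ, ∀ v ∈ Submodule.span ℝ (S : Set E3), ∃ s ∈ S, ‖v - s‖ ≤ C := by
  obtain ⟨t, htS, hts⟩ : ∃ t : Finset E3, (t : Set E3) ⊆ S ∧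
      Submodule.span ℝ (S : Set E3) ≤ Submodule.span ℝ (t : Set E3) := by
    obtain ⟨b, hbS, hb, hli⟩ := exists_linearIndependent ℝ (S : Set E3)
    have hfin : b.Finite := hli.setFinite
    exact ⟨hfin.toFinset, by simpa using hbS, by simp [hb]⟩
  refine ⟨∑ x ∈ t, ‖x‖, fun v hv => ?_⟩
  obtain ⟨c, hc⟩ := Submodule.mem_span_finset.1 (hts hv)
  refine ⟨∑ x ∈ t, ⌊c x⌋ • x, S.sum_mem fun x hx => S.zsmul_mem (htS hx) _, ?_⟩
  rw [← hc.2, ← Finset.sum_sub_distrib]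
  refine norm_sum_le_of_le _ fun x _ => ?_
  have : c x • x - ⌊c x⌋ • x = Int.fract (c x) • x := by
    rw [← Int.cast_smul_eq_zsmul ℝ, ← sub_smul]; rfl
  rw [this, norm_smul, Real.norm_of_nonneg (Int.fract_nonneg _)]
  exact mul_le_of_le_one_left (norm_nonneg _) (Int.fract_lt_one _).le

/-- Translation vectors of `Γ`. -/
def transVec (Γ : Subgroup AffT) : AddSubgroup E3 where
  carrier := {v | AffineEquiv.constVAdd ℝ E3 v ∈ Γ}
  zero_mem' := by
    simp only [Set.mem_ofPred_eq, AffineEquiv.constVAdd_zero]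
    exact Γ.one_mem
  add_mem' := by
    intro a b ha hb
    simp only [Set.mem_ofPred_eq, AffineEquiv.constVAdd_add] at *
    exact Γ.mul_mem ha hb
  neg_mem' := by
    intro a ha
    simp only [Set.mem_ofPred_eq] at *
    rw [← AffineEquiv.constVAdd_symm]
    exact Γ.inv_mem ha

lemma mem_transVec (Γ : Subgroup AffT) (v : E3) :
    v ∈ transVec Γ ↔ AffineEquiv.constVAdd ℝ E3 v ∈ Γ := Iff.rfl

lemma isTrans_iff (γ : AffT) (v : E3) :
    IsTranslationBy γ v ↔ γ = AffineEquiv.constVAdd ℝ E3 v := by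
  constructor
  · intro h
    ext1 x
    rw [h x]; simp [add_comm]
  · rintro rfl x
    simp [add_comm]

lemma eq_trans_of_linEnd (γ : AffT) (h : linEnd γ = 1) : IsTranslationBy γ (γ 0) := by
  intro x
  rw [aff_apply γ x, ← linEnd_apply, h]; rfl

theorem stmt_13 (Γ : Subgroup AffT)
    (hlin : ∀ γ ∈ Γ, ∃ (a b c : ℤ) (v : E3),
      HasForm γ !![1, (a : ℝ), (b : ℝ); 0, 1, (c : ℝ); 0, 0, 1] v)
    (hfree : IsFreeAction Γ) (hpd : IsProperlyDiscontinuous Γ)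
    (hcomp : HasCompactQuotient Γ)
    (hrk : Module.finrank ℝ
      (Submodule.span ℝ {v : E3 | ∃ γ ∈ Γ, IsTranslationBy γ v}) = 2) :
    ∃ g ∈ Γ, Γ = Subgroup.closure
      ({γ : AffT | γ ∈ Γ ∧ ∃ v : E3, IsTranslationBy γ v} ∪ {g}) := by
  have hunip : ∀ γ ∈ Γ, (linEnd γ - 1) ^ 3 = 0 := by
    intro γ hγ
    obtain ⟨a, b, c, v, h⟩ := hlin γ hγ
    exact linEnd_unip γ _ _ _ v h
  have hS : {v : E3 | ∃ γ ∈ Γ, IsTranslationBy γ v} = (transVec Γ : Set E3) := by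
    ext v
    simp [isTrans_iff, mem_transVec]
  rw [hS] at hrk
  obtain ⟨f, hf0, hfV⟩ : ∃ f : E3 →ₗ[ℝ] ℝ, f ≠ 0 ∧
      Submodule.span ℝ (transVec Γ : Set E3) ≤ LinearMap.ker f := by
    apply Submodule.exists_le_ker_of_lt_top
    rw [lt_top_iff_ne_top]
    intro h
    rw [h] at hrk
    simp at hrk
  have hsurj : Function.Surjective f := LinearMap.surjective hf0
  have hker : Submodule.span ℝ (transVec Γ : Set E3) = LinearMap.ker f := by
    apply Submodule.eq_of_le_of_finrank_eq hfV
    have := f.finrank_range_add_finrank_ker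
    rw [LinearMap.range_eq_top.2 hsurj] at this
    simp at this
    omega
  obtain ⟨w, hw⟩ := hsurj 1
  -- invariance
  have hinv : ∀ γ ∈ Γ, ∀ s ∈ transVec Γ, linEnd γ s ∈ transVec Γ := by
    intro γ hγ s hs
    rw [mem_transVec] at *
    have : AffineEquiv.constVAdd ℝ E3 (linEnd γ s) =
        γ * AffineEquiv.constVAdd ℝ E3 s * γ⁻¹ := by
      rw [eq_mul_inv_iff_mul_eq]
      ext1 x
      rw [aff_mul_apply, aff_mul_apply, AffineEquiv.constVAdd_apply,
        AffineEquiv.constVAdd_apply, AffineEquiv.map_vadd, linEnd_apply]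
    rw [this]
    exact Γ.mul_mem (Γ.mul_mem hγ hs) (Γ.inv_mem hγ)
  have hfl : ∀ γ ∈ Γ, ∀ x, f (linEnd γ x) = f x := by
    intro γ hγ
    have hV : ∀ x, f x = 0 → f (linEnd γ x) = 0 := by
      intro x hx
      have hx' : x ∈ Submodule.span ℝ (transVec Γ : Set E3) := by rw [hker]; exact hx
      have : Submodule.span ℝ (transVec Γ : Set E3) ≤
          (LinearMap.ker f).comap (linEnd γ) := by
        rw [Submodule.span_le]
        intro s hs
        exact hfV (Submodule.subset_span (hinv γ hγ s hs))
      exact this hx'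
    have hc : ∀ x, f ((linEnd γ - 1) x) = (f (linEnd γ w) - 1) * f x := by
      intro x
      have h1 := hV (x - f x • w) (by simp [hw])
      simp only [map_sub, map_smul, smul_eq_mul] at h1
      simp only [LinearMap.sub_apply, Module.End.one_apply, map_sub]
      linarith
    have h3 : f (((linEnd γ - 1) ^ 3 : Module.End ℝ E3) w) = 0 := by rw [hunip γ hγ]; simp
    rw [pow_succ, pow_two] at h3
    simp only [Module.End.mul_apply, hc, hw] at h3
    have h4 : f (linEnd γ w) - 1 = 0 := by simpa using h3
    intro x
    have := hc x
    rw [h4] at this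
    simp only [LinearMap.sub_apply, Module.End.one_apply, map_sub] at this
    linarith
  have hmul : ∀ γ ∈ Γ, ∀ δ : AffT, f ((γ * δ) 0) = f (γ 0) + f (δ 0) := by
    intro γ hγ δ
    rw [aff_mul_apply, aff_apply, map_add, ← linEnd_apply, hfl γ hγ, add_comm]
  -- finiteness
  obtain ⟨C, hC⟩ := span_near (transVec Γ)
  have hfin : {p : ℝ × Module.End ℝ E3 | ∃ γ ∈ Γ, |f (γ 0)| ≤ 1 ∧
      p = (f (γ 0), linEnd γ)}.Finite := by
    have hF := hpd {0} (Metric.closedBall 0 (C + ‖w‖)) isCompact_singleton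
      (isCompact_closedBall _ _)
    refine (hF.image fun γ => (f (γ 0), linEnd γ)).subset ?_
    rintro p ⟨γ, hγ, hle, rfl⟩
    obtain ⟨s, hs, hsC⟩ := hC (γ 0 - f (γ 0) • w) (by rw [hker]; simp [hw])
    have hs' : AffineEquiv.constVAdd ℝ E3 (-s) ∈ Γ := (transVec Γ).neg_mem hs
    have hfs : f s = 0 := hfV (Submodule.subset_span hs)
    have hval : (AffineEquiv.constVAdd ℝ E3 (-s) * γ) 0 = γ 0 - s := by
      rw [aff_mul_apply, AffineEquiv.constVAdd_apply, vadd_eq_add]; abel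
    refine ⟨AffineEquiv.constVAdd ℝ E3 (-s) * γ, ⟨Γ.mul_mem hs' hγ, ?_⟩, ?_⟩
    · refine ⟨γ 0 - s, ⟨0, rfl, hval⟩, ?_⟩
      rw [mem_closedBall_zero_iff]
      have e : γ 0 - s = (γ 0 - f (γ 0) • w - s) + f (γ 0) • w := by abel
      rw [e]
      refine (norm_add_le _ _).trans (add_le_add hsC ?_)
      rw [norm_smul, Real.norm_eq_abs]
      exact mul_le_of_le_one_left (norm_nonneg _) hle
    · have hl : linEnd (AffineEquiv.constVAdd ℝ E3 (-s) * γ) = linEnd γ := by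
        rw [map_mul]
        have : linEnd (AffineEquiv.constVAdd ℝ E3 (-s)) = 1 := rfl
        rw [this, one_mul]
      simp only [hl, hval, map_sub, hfs, sub_zero]
  -- the hom
  let φ : Γ →* Multiplicative ℝ :=
    { toFun := fun γ => Multiplicative.ofAdd (f (γ.1 0))
      map_one' := by
        change Multiplicative.ofAdd (f 0) = 1
        simp
      map_mul' := fun γ δ => by
        rw [← ofAdd_add, ← hmul γ.1 γ.2]; rfl }
  have hφ : ∀ γ : Γ, f (γ.1 0) = (φ γ).toAdd := fun γ => rfl
  have hkerT : ∀ γ ∈ Γ, f (γ 0) = 0 → IsTranslationBy γ (γ 0) := by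
    intro γ hγ h0
    apply eq_trans_of_linEnd
    have hp : ∀ n : ℕ, f ((γ ^ n) 0) = 0 := by
      intro n
      have h1 : φ ⟨γ, hγ⟩ = 1 := by
        apply Multiplicative.toAdd.injective
        exact h0
      have := hφ (⟨γ, hγ⟩ ^ n)
      rw [map_pow, h1, one_pow] at this
      exact this
    have hm : ∀ n : ℕ, ((0 : ℝ), linEnd γ ^ n) ∈ {p : ℝ × Module.End ℝ E3 |
        ∃ γ ∈ Γ, |f (γ 0)| ≤ 1 ∧ p = (f (γ 0), linEnd γ)} := by
      intro n
      exact ⟨γ ^ n, Γ.pow_mem hγ n, by simp [hp n], by rw [hp n, map_pow]⟩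
    obtain ⟨m, n, hmn, he⟩ : ∃ m n : ℕ, m < n ∧ linEnd γ ^ m = linEnd γ ^ n := by
      obtain ⟨m, _, n, _, hlt, he⟩ :=
        Set.infinite_univ.exists_lt_map_eq_of_mapsTo (fun n _ => hm n) hfin
      exact ⟨m, n, hlt, (Prod.mk.inj he).2⟩
    refine unip_torsion _ (hunip γ hγ) (n - m) (by omega) ?_
    have hu : linEnd γ ^ m * linEnd γ⁻¹ ^ m = 1 := by
      rw [← map_pow, ← map_pow, ← map_mul, inv_pow, mul_inv_cancel, map_one]
    have : linEnd γ ^ n = linEnd γ ^ (n - m) * linEnd γ ^ m := by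
      rw [← pow_add]; congr 1; omega
    rw [this] at he
    calc linEnd γ ^ (n - m) = linEnd γ ^ (n - m) * (linEnd γ ^ m * linEnd γ⁻¹ ^ m) := by
          rw [hu, mul_one]
      _ = linEnd γ ^ m * linEnd γ⁻¹ ^ m := by rw [← mul_assoc, ← he]
      _ = 1 := hu
  -- cyclicity
  let H : AddSubgroup ℝ := Subgroup.toAddSubgroup' φ.range
  have hH : ∀ r, r ∈ H ↔ ∃ γ ∈ Γ, f (γ 0) = r := by
    intro r
    constructor
    · rintro ⟨γ, h⟩
      exact ⟨γ.1, γ.2, h⟩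
    · rintro ⟨γ, hγ, h⟩
      exact ⟨⟨γ, hγ⟩, h⟩
  obtain ⟨b, hb⟩ : ∃ b, H = AddSubgroup.closure {b} := by
    have hfin2 : {r : ℝ | r ∈ H ∧ 0 < r ∧ r ≤ 1}.Finite := by
      refine (hfin.image Prod.fst).subset ?_
      rintro r ⟨hr, h0, h1⟩
      obtain ⟨γ, hγ, h⟩ := (hH r).1 hr
      exact ⟨(f (γ 0), linEnd γ), ⟨γ, hγ, by rw [h, abs_of_pos h0]; exact h1, rfl⟩, h⟩
    rcases Set.eq_empty_or_nonempty {r : ℝ | r ∈ H ∧ 0 < r ∧ r ≤ 1} with he | hne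
    · refine AddSubgroup.cyclic_of_isolated_zero one_pos ?_
      rw [Set.disjoint_left]
      intro r hr hr'
      have : r ∈ {r : ℝ | r ∈ H ∧ 0 < r ∧ r ≤ 1} := ⟨hr, hr'.1, hr'.2.le⟩
      rw [he] at this
      exact this
    · obtain ⟨a, ha, hmin⟩ := hfin2.exists_minimal hne
      refine AddSubgroup.cyclic_of_isolated_zero ha.2.1 ?_
      rw [Set.disjoint_left]
      intro r hr hr'
      have := hmin (y := r) ⟨hr, hr'.1, hr'.2.le.trans ha.2.2⟩ hr'.2.le
      exact absurd hr'.2 (not_lt.2 this)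
  obtain ⟨g, hg, hgb⟩ := (hH b).1 (by rw [hb]; exact AddSubgroup.subset_closure rfl)
  refine ⟨g, hg, le_antisymm ?_ ?_⟩
  · intro γ hγ
    have h1 : f (γ 0) ∈ AddSubgroup.closure {b} := by
      rw [← hb, hH]; exact ⟨γ, hγ, rfl⟩
    obtain ⟨n, hn⟩ := AddSubgroup.mem_closure_singleton.1 h1
    have hgn : f ((g ^ n) 0) = n • b := by
      have := hφ (⟨g, hg⟩ ^ n)
      rw [map_zpow, toAdd_zpow, ← hφ, hgb] at this
      exact this
    have hd : γ * (g ^ n)⁻¹ ∈ Γ := Γ.mul_mem hγ (Γ.inv_mem (Γ.zpow_mem hg n))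
    have h2 := hmul _ hd (g ^ n)
    rw [inv_mul_cancel_right, hgn, hn] at h2
    have h3 := hkerT _ hd (by linarith)
    rw [← inv_mul_cancel_right γ (g ^ n)]
    refine Subgroup.mul_mem _ (Subgroup.subset_closure (Or.inl ⟨hd, _, h3⟩)) ?_
    refine Subgroup.zpow_mem _ (Subgroup.subset_closure ?_) n
    exact Or.inr rfl
  · refine (Subgroup.closure_le Γ).2 ?_
    rintro γ (⟨h, -⟩ | rfl)
    · exact h
    · exact hg
end
end

section
/- Let A = [[a,b],[c,d]] ∈ SL₂(ℤ). Let Γ be the group of affine transformations of ℝ³ generated by g = ([[1,0,0],[0,a,b],[0,c,d]], (1,0,0)) and the pure translations t₁ = (I,(0,1,0)) and t₂ = (I,(0,0,1)). Then Γ acts freely and properly discontinuously on ℝ³ and the orbit space ℝ³/Γ is compact. -/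
open Matrix

noncomputable section

/-- Normal form of the elements of the group. -/
def NForm (A : Matrix.SpecialLinearGroup (Fin 2) ℤ) (γ : AffT) (n p q : ℤ) : Prop :=
  ∀ x, γ x = ![x 0 + n,
    (((A ^ n) 0 0 : ℤ) : ℝ) * x 1 + (((A ^ n) 0 1 : ℤ) : ℝ) * x 2 + p,
    (((A ^ n) 1 0 : ℤ) : ℝ) * x 1 + (((A ^ n) 1 1 : ℤ) : ℝ) * x 2 + q]

theorem NForm.mul {A : Matrix.SpecialLinearGroup (Fin 2) ℤ} {γ δ : AffT} {n p q m r s : ℤ}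
    (h : NForm A γ n p q) (k : NForm A δ m r s) :
    ∃ u v, NForm A (γ * δ) (n + m) u v := by
  refine ⟨(A ^ n) 0 0 * r + (A ^ n) 0 1 * s + p, (A ^ n) 1 0 * r + (A ^ n) 1 1 * s + q, ?_⟩
  intro x
  have e : (γ * δ) x = γ (δ x) := rfl
  rw [e, k x, h, _root_.zpow_add]
  ext i
  fin_cases i <;>
    simp [Matrix.SpecialLinearGroup.coe_mul, Matrix.mul_apply, Fin.sum_univ_two] <;> ring

theorem NForm.inv {A : Matrix.SpecialLinearGroup (Fin 2) ℤ} {γ : AffT} {n p q : ℤ}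
    (h : NForm A γ n p q) : ∃ u v, NForm A γ⁻¹ (-n) u v := by
  refine ⟨-((A ^ n) 1 1 * p - (A ^ n) 0 1 * q), -(-(A ^ n) 1 0 * p + (A ^ n) 0 0 * q), ?_⟩
  intro x
  have hd : (((A ^ n) 0 0 : ℤ) : ℝ) * (((A ^ n) 1 1 : ℤ) : ℝ)
      - (((A ^ n) 0 1 : ℤ) : ℝ) * (((A ^ n) 1 0 : ℤ) : ℝ) = 1 := by
    have := (A ^ n).det_coe
    rw [Matrix.det_fin_two] at this
    exact_mod_cast this
  have key : ∀ y, γ y = x → γ⁻¹ x = y := by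
    rintro y rfl
    exact γ.symm_apply_apply y
  apply key
  rw [h, _root_.zpow_neg, Matrix.SpecialLinearGroup.SL2_inv_expl]
  ext i
  fin_cases i
  · simp
  · simp
    linear_combination (x 1 - p) * hd
  · simp
    linear_combination (x 2 - q) * hd

theorem NForm.unique {A : Matrix.SpecialLinearGroup (Fin 2) ℤ} {γ δ : AffT} {n p q : ℤ}
    (h : NForm A γ n p q) (k : NForm A δ n p q) : γ = δ := by
  apply AffineEquiv.ext
  intro x
  rw [h x, k x]

theorem NForm.one (A : Matrix.SpecialLinearGroup (Fin 2) ℤ) : NForm A 1 0 0 0 := by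
  intro x
  ext i
  fin_cases i <;> simp

theorem trans_zpow {t : AffT} {v : E3} (h : IsTranslationBy t v) (n : ℤ) (x : E3) :
    (t ^ n) x = x + (n : ℝ) • v := by
  have hi : ∀ x, t⁻¹ x = x - v := by
    intro x
    have e : t (x - v) = x := by rw [h]; simp
    calc t⁻¹ x = t⁻¹ (t (x - v)) := by rw [e]
      _ = x - v := t.symm_apply_apply _
  induction n using Int.induction_on generalizing x with
  | zero => simp
  | succ k ih =>
    rw [_root_.zpow_add_one]
    change (t ^ (k : ℤ)) (t x) = _
    rw [ih, h]
    push_cast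
    module
  | pred k ih =>
    rw [_root_.zpow_sub_one]
    change (t ^ (-(k : ℤ))) (t⁻¹ x) = _
    rw [ih, hi]
    push_cast
    module

theorem NForm.zpow {A : Matrix.SpecialLinearGroup (Fin 2) ℤ} {g : AffT} {p q : ℤ}
    (h : NForm A g 1 p q) (n : ℤ) : ∃ u v, NForm A (g ^ n) n u v := by
  induction n using Int.induction_on with
  | zero => exact ⟨0, 0, by simpa using NForm.one A⟩
  | succ k ih =>
    obtain ⟨u, v, ih⟩ := ih
    rw [_root_.zpow_add_one]
    exact ih.mul h
  | pred k ih =>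
    obtain ⟨u, v, ih⟩ := ih
    obtain ⟨u', v', h'⟩ := h.inv
    rw [_root_.zpow_sub_one]
    exact ih.mul h'

theorem free_of_nform (A : Matrix.SpecialLinearGroup (Fin 2) ℤ) (Γ : Subgroup AffT)
    (H : ∀ γ ∈ Γ, ∃ n p q, NForm A γ n p q) : IsFreeAction Γ := by
  rintro γ hγ ⟨x, hx⟩
  obtain ⟨n, p, q, h⟩ := H γ hγ
  have e := (h x).symm.trans hx
  have hn : n = 0 := by
    have := congrFun e 0
    simpa using this
  subst hn
  have hp : p = 0 := by
    have := congrFun e 1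
    simpa using this
  have hq : q = 0 := by
    have := congrFun e 2
    simpa using this
  subst hp hq
  exact h.unique (NForm.one A)

theorem pd_of_nform (A : Matrix.SpecialLinearGroup (Fin 2) ℤ) (Γ : Subgroup AffT)
    (H : ∀ γ ∈ Γ, ∃ n p q, NForm A γ n p q) : IsProperlyDiscontinuous Γ := by
  intro K L hK hL
  obtain ⟨R, hR⟩ := hK.isBounded.exists_norm_le
  obtain ⟨S, hS⟩ := hL.isBounded.exists_norm_le
  let C : ℤ → Fin 2 → ℤ := fun n i =>
    ⌈S + |(((A ^ n) i 0 : ℤ) : ℝ)| * R + |(((A ^ n) i 1 : ℤ) : ℝ)| * R⌉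
  have hfin : (⋃ n ∈ Set.Icc (-⌈R + S⌉) ⌈R + S⌉, ⋃ p ∈ Set.Icc (-C n 0) (C n 0),
      ⋃ q ∈ Set.Icc (-C n 1) (C n 1), {γ : AffT | NForm A γ n p q}).Finite := by
    refine (Set.finite_Icc _ _).biUnion fun n _ => (Set.finite_Icc _ _).biUnion fun p _ =>
      (Set.finite_Icc _ _).biUnion fun q _ => ?_
    exact Set.Subsingleton.finite fun γ h δ k => NForm.unique h k
  refine hfin.subset ?_
  rintro γ ⟨hγ, y, ⟨x, hx, rfl⟩, hy⟩
  obtain ⟨n, p, q, h⟩ := H γ hγ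
  have bx : ∀ i, |x i| ≤ R := fun i => (norm_le_pi_norm x i).trans (hR x hx)
  have bY : ∀ i, |γ x i| ≤ S := fun i => (norm_le_pi_norm (γ x) i).trans (hS _ hy)
  have e := h x
  have aux : ∀ (z : ℝ) (k : ℤ), |(k : ℝ)| ≤ z → k ∈ Set.Icc (-⌈z⌉) ⌈z⌉ := by
    intro z k hk
    have h1 := abs_le.1 (hk.trans (Int.le_ceil z))
    exact ⟨by exact_mod_cast h1.1, by exact_mod_cast h1.2⟩
  have aux2 : ∀ (y α β u v k : ℝ), y = α * u + β * v + k → |y| ≤ S → |u| ≤ R → |v| ≤ R →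
      |k| ≤ S + |α| * R + |β| * R := by
    intro y α β u v k hy h1 h2 h3
    have : k = y - α * u - β * v := by linarith
    rw [this]
    have i1 := abs_sub (y - α * u) (β * v)
    have i2 := abs_sub y (α * u)
    rw [abs_mul] at i1 i2
    have i3 := mul_le_mul_of_nonneg_left h2 (abs_nonneg α)
    have i4 := mul_le_mul_of_nonneg_left h3 (abs_nonneg β)
    linarith
  simp only [Set.mem_iUnion]
  refine ⟨n, aux _ _ ?_, p, aux _ _ ?_, q, aux _ _ ?_, h⟩
  · have e0 : γ x 0 = x 0 + n := by rw [e]; simp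
    have : (n : ℝ) = γ x 0 - x 0 := by linarith
    rw [this]
    have := abs_sub (γ x 0) (x 0)
    linarith [bx 0, bY 0]
  · exact aux2 _ _ _ _ _ _ (by rw [e]; simp) (bY 1) (bx 1) (bx 2)
  · exact aux2 _ _ _ _ _ _ (by rw [e]; simp) (bY 2) (bx 1) (bx 2)

theorem compact_of_mem (Γ : Subgroup AffT)
    (H : ∀ x : E3, ∃ γ ∈ Γ, γ x ∈ Set.Icc (0 : E3) 1) : HasCompactQuotient Γ := by
  refine ⟨?_⟩
  have hc : IsCompact ((Quotient.mk (orbitSetoid Γ)) '' Set.Icc (0 : E3) 1) :=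
    isCompact_Icc.image continuous_quotient_mk'
  convert hc
  symm
  rw [Set.eq_univ_iff_forall]
  intro z
  induction z using Quotient.inductionOn with
  | h x =>
    obtain ⟨γ, hγ, h⟩ := H x
    exact ⟨γ x, h, (Quotient.sound (s := orbitSetoid Γ) ⟨γ, hγ, rfl⟩).symm⟩

/-- the suspension of `A ∈ SL₂(ℤ)` gives a free, properly discontinuous action
with compact quotient. -/
theorem stmt_14 (a b c d : ℤ) (hdet : a * d - b * c = 1)
    (g t₁ t₂ : AffT)
    (hg : HasForm g !![1, 0, 0; 0, (a : ℝ), (b : ℝ); 0, (c : ℝ), (d : ℝ)] ![1, 0, 0])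
    (ht₁ : IsTranslationBy t₁ ![0, 1, 0])
    (ht₂ : IsTranslationBy t₂ ![0, 0, 1])
    (Γ : Subgroup AffT) (hΓ : Γ = Subgroup.closure {g, t₁, t₂}) :
    IsFreeAction Γ ∧ IsProperlyDiscontinuous Γ ∧ HasCompactQuotient Γ := by
  let A : Matrix.SpecialLinearGroup (Fin 2) ℤ :=
    ⟨!![a, b; c, d], by rw [Matrix.det_fin_two_of]; exact hdet⟩
  have ng : NForm A g 1 0 0 := by
    intro x
    rw [hg x, _root_.zpow_one]
    ext i
    fin_cases i <;> simp [A, dotProduct, Fin.sum_univ_three]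
  have n1 : NForm A t₁ 0 1 0 := by
    intro x
    rw [ht₁ x]
    ext i
    fin_cases i <;> simp
  have n2 : NForm A t₂ 0 0 1 := by
    intro x
    rw [ht₂ x]
    ext i
    fin_cases i <;> simp
  have H : ∀ γ ∈ Γ, ∃ n p q, NForm A γ n p q := by
    intro γ hγ
    rw [hΓ] at hγ
    induction hγ using Subgroup.closure_induction with
    | mem x hx =>
      rcases hx with rfl | rfl | rfl
      · exact ⟨_, _, _, ng⟩
      · exact ⟨_, _, _, n1⟩
      · exact ⟨_, _, _, n2⟩
    | one => exact ⟨_, _, _, NForm.one A⟩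
    | mul x y _ _ hx hy =>
      obtain ⟨n, p, q, h⟩ := hx
      obtain ⟨m, r, s, k⟩ := hy
      exact ⟨_, h.mul k⟩
    | inv x _ hx =>
      obtain ⟨n, p, q, h⟩ := hx
      exact ⟨_, h.inv⟩
  refine ⟨free_of_nform A Γ H, pd_of_nform A Γ H, compact_of_mem Γ ?_⟩
  intro x
  have mg : g ∈ Γ := by rw [hΓ]; exact Subgroup.subset_closure (by simp)
  have m1 : t₁ ∈ Γ := by rw [hΓ]; exact Subgroup.subset_closure (by simp)
  have m2 : t₂ ∈ Γ := by rw [hΓ]; exact Subgroup.subset_closure (by simp)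
  obtain ⟨u, v, hz⟩ := ng.zpow (-⌊x 0⌋)
  set y := (g ^ (-⌊x 0⌋)) x with hy
  have y0 : y 0 = x 0 - ⌊x 0⌋ := by
    rw [hy, hz x]; simp [sub_eq_add_neg]
  refine ⟨t₁ ^ (-⌊y 1⌋) * (t₂ ^ (-⌊y 2⌋) * g ^ (-⌊x 0⌋)),
    Γ.mul_mem (Γ.zpow_mem m1 _) (Γ.mul_mem (Γ.zpow_mem m2 _) (Γ.zpow_mem mg _)), ?_⟩
  have e : (t₁ ^ (-⌊y 1⌋) * (t₂ ^ (-⌊y 2⌋) * g ^ (-⌊x 0⌋))) x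
      = (t₁ ^ (-⌊y 1⌋)) ((t₂ ^ (-⌊y 2⌋)) y) := rfl
  rw [e, trans_zpow ht₁, trans_zpow ht₂]
  have f0 := Int.floor_le (x 0)
  have f0' := Int.lt_floor_add_one (x 0)
  have f1 := Int.floor_le (y 1)
  have f1' := Int.lt_floor_add_one (y 1)
  have f2 := Int.floor_le (y 2)
  have f2' := Int.lt_floor_add_one (y 2)
  constructor
  · intro i
    fin_cases i <;> simp [Matrix.vecHead, Matrix.vecTail] <;> linarith
  · intro i
    fin_cases i <;> simp [Matrix.vecHead, Matrix.vecTail] <;> linarith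
end
end

section
/- Fix λ ∈ ℝ. For (s,t,u) ∈ ℝ³ let g_{s,t,u} be the affine transformation of ℝ³ with linear part [[1, λ·e^s·u, λ·e^{−s}·t],[0, e^s, 0],[0, 0, e^{−s}]] and vector part (s + λ·u·t, t, u). Then the set I_λ = {g_{s,t,u} : (s,t,u) ∈ ℝ³} is a subgroup of the group of invertible affine transformations of ℝ³ (it contains the identity and is closed under composition and inversion), and it acts freely and transitively on ℝ³: for all p, q ∈ ℝ³ there exists exactly one (s,t,u) ∈ ℝ³ with g_{s,t,u}(p) = q. -/
open Matrix

noncomputable section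

/-- The affine transformation `g_{s,t,u}` of the family `I_λ`. -/
def Ifam (lam s t u : ℝ) : E3 → E3 := fun x =>
  (!![1, lam * Real.exp s * u, lam * Real.exp (-s) * t;
      0, Real.exp s, 0;
      0, 0, Real.exp (-s)]).mulVec x + ![s + lam * u * t, t, u]

theorem Ifam_apply (lam s t u : ℝ) (x : E3) : Ifam lam s t u x =
    ![x 0 + lam * Real.exp s * u * x 1 + lam * Real.exp (-s) * t * x 2 + (s + lam * u * t),
      Real.exp s * x 1 + t, Real.exp (-s) * x 2 + u] := by
  ext i
  fin_cases i <;> simp [Ifam, dotProduct, Fin.sum_univ_three]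

theorem Ifam_zero (lam : ℝ) (x : E3) : Ifam lam 0 0 0 x = x := by
  rw [Ifam_apply]
  ext i
  fin_cases i <;> simp

theorem Ifam_comp (lam s t u s' t' u' : ℝ) (x : E3) :
    Ifam lam s t u (Ifam lam s' t' u' x) =
      Ifam lam (s + s') (Real.exp s * t' + t) (Real.exp (-s) * u' + u) x := by
  have h : Real.exp s * Real.exp (-s) = 1 := by rw [← Real.exp_add]; simp
  have h' : Real.exp s' * Real.exp (-s') = 1 := by rw [← Real.exp_add]; simp
  simp only [Ifam_apply, neg_add, Real.exp_add]
  generalize Real.exp s = a at *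
  generalize Real.exp (-s) = b at *
  generalize Real.exp s' = c at *
  generalize Real.exp (-s') = d at *
  ext i
  fin_cases i
  · simp
    linear_combination (-lam * (c * u' * x 1 + d * t' * x 2 + t' * u')) * h
  · simp
    ring
  · simp
    ring

theorem Ifam_inv_left (lam s t u : ℝ) (x : E3) :
    Ifam lam (-s) (-(Real.exp (-s) * t)) (-(Real.exp s * u)) (Ifam lam s t u x) = x := by
  rw [Ifam_comp]
  simpa using Ifam_zero lam x

theorem Ifam_inv_right (lam s t u : ℝ) (x : E3) :
    Ifam lam s t u (Ifam lam (-s) (-(Real.exp (-s) * t)) (-(Real.exp s * u)) x) = x := by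
  have h : Real.exp s * Real.exp (-s) = 1 := by rw [← Real.exp_add]; simp
  rw [Ifam_comp]
  have h1 : Real.exp s * -(Real.exp (-s) * t) + t = 0 := by linear_combination -t * h
  have h2 : Real.exp (-s) * -(Real.exp s * u) + u = 0 := by linear_combination -u * h
  rw [h1, h2, add_neg_cancel]
  exact Ifam_zero lam x

def IfamMap (lam s t u : ℝ) : E3 →ᵃ[ℝ] E3 :=
  (Matrix.mulVecLin !![1, lam * Real.exp s * u, lam * Real.exp (-s) * t;
      0, Real.exp s, 0;
      0, 0, Real.exp (-s)]).toAffineMap + AffineMap.const ℝ E3 ![s + lam * u * t, t, u]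

theorem IfamMap_apply (lam s t u : ℝ) (x : E3) : IfamMap lam s t u x = Ifam lam s t u x := rfl

/-- the family `I_λ` is a subgroup of the invertible affine transformations of ℝ³
and acts freely and transitively on ℝ³. -/
theorem stmt_15 (lam : ℝ) (S : Set AffT)
    (hS : S = {γ : AffT | ∃ s t u : ℝ, ∀ x, γ x = Ifam lam s t u x}) :
    (∀ s t u : ℝ, ∃ γ : AffT, ∀ x, γ x = Ifam lam s t u x) ∧
    (1 : AffT) ∈ S ∧
    (∀ γ₁ ∈ S, ∀ γ₂ ∈ S, γ₁ * γ₂ ∈ S) ∧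
    (∀ γ ∈ S, γ⁻¹ ∈ S) ∧
    (∀ p q : E3, ∃! stu : ℝ × ℝ × ℝ, Ifam lam stu.1 stu.2.1 stu.2.2 p = q) := by
  subst hS
  refine ⟨?_, ⟨0, 0, 0, fun x => (Ifam_zero lam x).symm⟩, ?_, ?_, ?_⟩
  · intro s t u
    have hb : Function.Bijective (IfamMap lam s t u) := by
      refine Function.bijective_iff_has_inverse.mpr
        ⟨Ifam lam (-s) (-(Real.exp (-s) * t)) (-(Real.exp s * u)), fun x => ?_, fun x => ?_⟩
      · exact Ifam_inv_left lam s t u x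
      · exact Ifam_inv_right lam s t u x
    exact ⟨AffineEquiv.ofBijective hb, fun x => rfl⟩
  · rintro γ₁ ⟨s, t, u, h⟩ γ₂ ⟨s', t', u', h'⟩
    refine ⟨s + s', Real.exp s * t' + t, Real.exp (-s) * u' + u, fun x => ?_⟩
    rw [← Ifam_comp lam s t u s' t' u', ← h', ← h]
    rfl
  · rintro γ ⟨s, t, u, h⟩
    refine ⟨-s, -(Real.exp (-s) * t), -(Real.exp s * u), fun x => ?_⟩
    apply γ.injective
    rw [h (Ifam _ _ _ _ _), Ifam_inv_right]
    exact γ.apply_symm_apply x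
  · intro p q
    obtain ⟨s, hs⟩ : ∃ s, s = q 0 - lam * q 1 * q 2 - p 0 + lam * p 1 * p 2 := ⟨_, rfl⟩
    refine ⟨(s, q 1 - Real.exp s * p 1, q 2 - Real.exp (-s) * p 2), ?_, ?_⟩
    · have h : Real.exp s * Real.exp (-s) = 1 := by rw [← Real.exp_add]; simp
      simp only [Ifam_apply]
      generalize Real.exp s = a at *
      generalize Real.exp (-s) = b at *
      ext i
      fin_cases i
      · simp
        linear_combination hs - lam * p 1 * p 2 * h
      · simp
      · simp
    · rintro ⟨s', t, u⟩ h
      have h1 : Real.exp s' * Real.exp (-s') = 1 := by rw [← Real.exp_add]; simp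
      simp only [Ifam_apply] at h
      have e0 := congrFun h 0
      have e1 := congrFun h 1
      have e2 := congrFun h 2
      simp at e0 e1 e2
      have : s' = s := by
        rw [hs, ← e0, ← e1, ← e2]
        linear_combination lam * p 1 * p 2 * h1
      subst this
      rw [← e1, ← e2]
      simp
end
end

section
/- Let p, q, a, b, c, d ∈ ℤ with a·d − b·c = 1 and a + d > 2, let x₁ ∈ ℝ, and let v₁ = (x₁,0,0), v₂ = (x₂,y₂,z₂), v₃ = (x₃,y₃,z₃) ∈ ℝ³ be linearly independent vectors. Let L = [[1,p,q],[0,a,b],[0,c,d]], and assume there exists A ∈ SL₂(ℤ) such that L·M = M·A, where M is the 3×2 real matrix with columns v₂ and v₃. Let Γ be the group of affine transformations of ℝ³ generated by g = (L, v₁) and the pure translations t₁ = (I, v₂), t₂ = (I, v₃). Then Γ acts freely and properly discontinuously on ℝ³ and the orbit space ℝ³/Γ is compact. -/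
open Matrix

noncomputable section

/-- If `f` conjugates `γ` to translation by `r`, then it conjugates `γ ^ n` to translation by
`n • r`. -/
theorem zpow_conj_translation {W : Type*} [AddCommGroup W] (f : E3 → W) (γ : AffT) (r : W)
    (h : ∀ x, f (γ x) = f x + r) (n : ℤ) : ∀ x, f ((γ ^ n) x) = f x + n • r := by
  have hinv : ∀ x, f (γ⁻¹ x) = f x - r := by
    intro x
    have h1 := h (γ⁻¹ x)
    have h2 : γ (γ⁻¹ x) = x := γ.apply_symm_apply x
    rw [h2] at h1
    rw [h1]; abel
  induction n using Int.induction_on with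
  | zero => intro x; simp
  | succ k ih =>
    intro x
    rw [_root_.zpow_add_one, AffineEquiv.mul_def, AffineEquiv.trans_apply, ih, h, add_smul, one_smul]
    abel
  | pred k ih =>
    intro x
    rw [_root_.zpow_sub_one, AffineEquiv.mul_def, AffineEquiv.trans_apply, ih, hinv, sub_smul, one_smul]
    abel

theorem int_finite_of_compact (C : Set ℝ) (hC : IsCompact C) : {k : ℤ | (k : ℝ) ∈ C}.Finite :=
  isCompact_iff_finite.1 (Int.isClosedEmbedding_coe_real.isCompact_preimage hC)

/-- real matrix of an element of SL₂(ℤ) -/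
def rm (B : SpecialLinearGroup (Fin 2) ℤ) : Matrix (Fin 2) (Fin 2) ℝ :=
  (B : Matrix (Fin 2) (Fin 2) ℤ).map (Int.cast : ℤ → ℝ)

theorem rm_one : rm 1 = 1 := by
  ext i j; fin_cases i <;> fin_cases j <;> simp [rm]

theorem rm_mul (B C : SpecialLinearGroup (Fin 2) ℤ) : rm (B * C) = rm B * rm C := by
  ext i j; simp [rm, Matrix.mul_apply]

theorem rm_mulVec_int (B : SpecialLinearGroup (Fin 2) ℤ) (m : Fin 2 → ℤ) :
    rm B *ᵥ (fun i => (m i : ℝ)) = fun i => (((B : Matrix (Fin 2) (Fin 2) ℤ) *ᵥ m) i : ℝ) := by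
  ext i; simp [rm, Matrix.mulVec, dotProduct]

/-- The shape of elements of the group in adapted coordinates. -/
def Shape (e : E3 → E3) (A : SpecialLinearGroup (Fin 2) ℤ) (n : ℤ) (m : Fin 2 → ℤ) (γ : AffT) :
    Prop :=
  ∀ x, e (γ x) 0 = e x 0 + n ∧
    (fun i : Fin 2 => e (γ x) i.succ) =
      rm (A ^ n) *ᵥ (fun i : Fin 2 => e x i.succ) + fun i => (m i : ℝ)

theorem Shape.unique (e : E3 ≃ₗ[ℝ] E3) {A n m γ δ} (h : Shape e A n m γ) (h' : Shape e A n m δ) :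
    γ = δ := by
  ext1 x
  apply e.injective
  ext i
  refine Fin.cases ?_ (fun i => ?_) i
  · rw [(h x).1, (h' x).1]
  · exact congrFun ((h x).2.trans (h' x).2.symm) i

theorem Shape.one (e : E3 → E3) (A) : Shape e A 0 0 1 := by
  intro x
  constructor
  · simp
  · ext i; simp [rm_one]

theorem Shape.mul {e : E3 → E3} {A n m γ n' m' δ} (h : Shape e A n m γ) (h' : Shape e A n' m' δ) :
    Shape e A (n + n') (((A ^ n : SpecialLinearGroup (Fin 2) ℤ) : Matrix (Fin 2) (Fin 2) ℤ) *ᵥ m' + m)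
      (γ * δ) := by
  intro x
  rw [AffineEquiv.mul_def, AffineEquiv.trans_apply]
  constructor
  · rw [(h _).1, (h' _).1]; push_cast; ring
  · rw [(h _).2, (h' _).2, Matrix.mulVec_add, Matrix.mulVec_mulVec, ← rm_mul, ← _root_.zpow_add,
      rm_mulVec_int, add_assoc]
    congr 1
    ext i; simp

theorem Shape.inv {e : E3 → E3} {A n m γ} (h : Shape e A n m γ) :
    Shape e A (-n)
      (-(((A ^ (-n) : SpecialLinearGroup (Fin 2) ℤ) : Matrix (Fin 2) (Fin 2) ℤ) *ᵥ m)) γ⁻¹ := by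
  intro x
  have hx : γ (γ⁻¹ x) = x := γ.apply_symm_apply x
  have h1 := h (γ⁻¹ x)
  rw [hx] at h1
  constructor
  · rw [h1.1]; push_cast; ring
  · rw [h1.2, Matrix.mulVec_add, Matrix.mulVec_mulVec, ← rm_mul, ← _root_.zpow_add, rm_mulVec_int]
    ext i; simp [rm_one]

theorem free_of_shape (e : E3 ≃ₗ[ℝ] E3) (A) (Γ : Subgroup AffT)
    (h : ∀ γ ∈ Γ, ∃ n m, Shape e A n m γ) : IsFreeAction Γ := by
  rintro γ hγ ⟨x, hx⟩
  obtain ⟨n, m, hs⟩ := h γ hγ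
  have h1 := hs x
  rw [hx] at h1
  have hn : n = 0 := by
    have := h1.1
    have h2 : (n : ℝ) = 0 := by linarith
    exact_mod_cast h2
  subst hn
  have hm : m = 0 := by
    ext i
    have h2 := congrFun h1.2 i
    simp [rm_one] at h2
    exact h2
  subst hm
  exact hs.unique e (Shape.one e A)

theorem pd_of_shape (e : E3 ≃ₗ[ℝ] E3) (A) (Γ : Subgroup AffT)
    (h : ∀ γ ∈ Γ, ∃ n m, Shape e A n m γ) : IsProperlyDiscontinuous Γ := by
  intro K L hK hL
  have he : Continuous e := e.toLinearMap.continuous_of_finiteDimensional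
  have hKL := hK.prod hL
  let N : Set ℤ := {k : ℤ | (k : ℝ) ∈ (fun z : E3 × E3 => e z.2 0 - e z.1 0) '' (K ×ˢ L)}
  have hN : N.Finite := int_finite_of_compact _ (hKL.image (by fun_prop))
  let M : ℤ → Fin 2 → Set ℤ := fun n i => {k : ℤ | (k : ℝ) ∈
    (fun z : E3 × E3 => e z.2 i.succ - (rm (A ^ n) *ᵥ (fun i : Fin 2 => e z.1 i.succ)) i) ''
      (K ×ˢ L)}
  have hM : ∀ n i, (M n i).Finite := fun n i => int_finite_of_compact _ (hKL.image (by
    have h2 : Continuous fun z : E3 × E3 => rm (A ^ n) *ᵥ (fun i : Fin 2 => e z.1 i.succ) :=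
      Continuous.matrix_mulVec continuous_const (by fun_prop)
    exact Continuous.sub (by fun_prop) ((continuous_apply i).comp h2)))
  refine Set.Finite.subset (hN.biUnion fun n _ =>
    (Set.Finite.pi' (hM n)).biUnion fun m _ =>
      Set.Subsingleton.finite (s := {γ | Shape e A n m γ})
        fun γ hγ δ hδ => Shape.unique e hγ hδ) ?_
  rintro γ ⟨hγ, y, ⟨x, hx, rfl⟩, hy⟩
  obtain ⟨n, m, hs⟩ := h γ hγ
  simp only [Set.mem_iUnion]
  refine ⟨n, ⟨(x, γ x), ⟨hx, hy⟩, ?_⟩, m, fun i => ⟨(x, γ x), ⟨hx, hy⟩, ?_⟩, hs⟩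
  · simp [(hs x).1]
  · have := congrFun (hs x).2 i
    simp only [Pi.add_apply] at this
    simp only [this]
    ring

theorem cocompact_of_coords (e : E3 ≃ₗ[ℝ] E3) (Γ : Subgroup AffT) (g t₁ t₂ : AffT)
    (hg : g ∈ Γ) (h1 : t₁ ∈ Γ) (h2 : t₂ ∈ Γ) (hg' : ∀ x, e (g x) 0 = e x 0 + 1)
    (h1' : ∀ x, e (t₁ x) = e x + ![0, 1, 0]) (h2' : ∀ x, e (t₂ x) = e x + ![0, 0, 1]) :
    HasCompactQuotient Γ := by
  have he : Continuous e.symm := e.symm.toLinearMap.continuous_of_finiteDimensional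
  have hK : IsCompact (e.symm '' Set.Icc (0 : E3) 1) := isCompact_Icc.image he
  let _ := orbitSetoid Γ
  have hq : Continuous (Quotient.mk (orbitSetoid Γ)) := continuous_quotient_mk'
  refine ⟨?_⟩
  convert hK.image hq
  symm
  rw [Set.eq_univ_iff_forall]
  intro z
  induction z using Quotient.inductionOn with
  | h x =>
    set n : ℤ := -⌊e x 0⌋ with hn
    set y := (g ^ n) x with hy
    set k : ℤ := -⌊e y 1⌋ with hk
    set l : ℤ := -⌊e y 2⌋ with hl
    have hy0 := zpow_conj_translation (fun x => e x 0) g 1 hg' n x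
    have ht1 := zpow_conj_translation e t₁ _ h1' k y
    have ht2 := zpow_conj_translation e t₂ _ h2' l ((t₁ ^ k) y)
    rw [ht1] at ht2
    simp only [← hy] at hy0
    refine ⟨(t₂ ^ l) ((t₁ ^ k) y), ⟨_, ?_, e.symm_apply_apply _⟩, ?_⟩
    · rw [ht2]
      have a0 := Int.floor_le (e x 0)
      have a1 := Int.lt_floor_add_one (e x 0)
      have b0 := Int.floor_le (e y 1)
      have b1 := Int.lt_floor_add_one (e y 1)
      have c0 := Int.floor_le (e y 2)
      have c1 := Int.lt_floor_add_one (e y 2)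
      constructor <;> intro i <;> fin_cases i <;>
        simp [hn, hk, hl, -Matrix.add_cons, -Matrix.cons_add] <;> simp [hn] at hy0 <;> linarith
    · refine Quotient.sound (Setoid.symm ⟨t₂ ^ l * t₁ ^ k * g ^ n, ?_, rfl⟩)
      exact Γ.mul_mem (Γ.mul_mem (Γ.zpow_mem h2 _) (Γ.zpow_mem h1 _)) (Γ.zpow_mem hg _)

/-- hyperbolic suspensions with integral linear part give free, properly
discontinuous actions with compact quotient. -/
theorem stmt_16 (p q a b c d : ℤ) (hdet : a * d - b * c = 1) (htr : a + d > 2)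
    (x₁ : ℝ) (v₂ v₃ : E3)
    (hindep : LinearIndependent ℝ ![![x₁, 0, 0], v₂, v₃])
    (hA : ∃ A : Matrix (Fin 2) (Fin 2) ℤ, A.det = 1 ∧
      (!![1, (p : ℝ), (q : ℝ); 0, (a : ℝ), (b : ℝ); 0, (c : ℝ), (d : ℝ)]) *
          (Matrix.of fun i j => ![v₂, v₃] j i) =
        (Matrix.of fun i j => ![v₂, v₃] j i) * A.map (Int.cast : ℤ → ℝ))
    (g t₁ t₂ : AffT)
    (hg : HasForm g !![1, (p : ℝ), (q : ℝ); 0, (a : ℝ), (b : ℝ); 0, (c : ℝ), (d : ℝ)]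
      ![x₁, 0, 0])
    (ht₁ : IsTranslationBy t₁ v₂) (ht₂ : IsTranslationBy t₂ v₃)
    (Γ : Subgroup AffT) (hΓ : Γ = Subgroup.closure {g, t₁, t₂}) :
    IsFreeAction Γ ∧ IsProperlyDiscontinuous Γ ∧ HasCompactQuotient Γ := by
  obtain ⟨A, hAdet, hA⟩ := hA
  subst hΓ
  let bs := basisOfLinearIndependentOfCardEqFinrank hindep (by simp)
  let e : E3 ≃ₗ[ℝ] E3 := bs.equivFun
  have hes : ∀ u : E3, e.symm u = u 0 • ![x₁, 0, 0] + u 1 • v₂ + u 2 • v₃ := by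
    intro u
    simp [e, bs, Module.Basis.equivFun_symm_apply, Fin.sum_univ_three]
  let B : SpecialLinearGroup (Fin 2) ℤ := ⟨A, hAdet⟩
  have e00 := congrFun (congrFun hA 0) 0
  have e01 := congrFun (congrFun hA 0) 1
  have e10 := congrFun (congrFun hA 1) 0
  have e11 := congrFun (congrFun hA 1) 1
  have e20 := congrFun (congrFun hA 2) 0
  have e21 := congrFun (congrFun hA 2) 1
  simp [Matrix.mul_apply, Fin.sum_univ_three, Fin.sum_univ_two] at e00 e01 e10 e11 e20 e21
  have hgc : ∀ x, e (g x) = ![e x 0 + 1, A 0 0 * e x 1 + A 0 1 * e x 2,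
      A 1 0 * e x 1 + A 1 1 * e x 2] := by
    intro x
    obtain ⟨u, rfl⟩ := e.symm.surjective x
    rw [LinearEquiv.apply_symm_apply, ← LinearEquiv.eq_symm_apply, hg, hes, hes]
    ext i
    fin_cases i <;> simp [Matrix.mulVec, dotProduct, Fin.sum_univ_three, -Matrix.add_cons,
      -Matrix.cons_add]
    · linear_combination u 1 * e00 + u 2 * e01
    · linear_combination u 1 * e10 + u 2 * e11
    · linear_combination u 1 * e20 + u 2 * e21
  have h1c : ∀ x, e (t₁ x) = e x + ![0, 1, 0] := by
    intro x
    rw [ht₁, map_add]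
    congr 1
    rw [← LinearEquiv.eq_symm_apply, hes]
    simp
  have h2c : ∀ x, e (t₂ x) = e x + ![0, 0, 1] := by
    intro x
    rw [ht₂, map_add]
    congr 1
    rw [← LinearEquiv.eq_symm_apply, hes]
    simp
  have hsh : ∀ γ ∈ Subgroup.closure {g, t₁, t₂}, ∃ n m, Shape e B n m γ := by
    intro γ hγ
    induction hγ using Subgroup.closure_induction with
    | mem x hx =>
      rcases hx with rfl | rfl | rfl
      · refine ⟨1, 0, fun x => ⟨by simp [hgc], ?_⟩⟩
        rw [_root_.zpow_one]
        ext i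
        fin_cases i <;> simp [hgc, rm, B, Matrix.mulVec, dotProduct, Fin.sum_univ_two]
      · refine ⟨0, ![1, 0], fun x => ⟨by simp [h1c], ?_⟩⟩
        ext i
        fin_cases i <;> simp [h1c, rm_one]
      · refine ⟨0, ![0, 1], fun x => ⟨by simp [h2c], ?_⟩⟩
        ext i
        fin_cases i <;> simp [h2c, rm_one]
    | one => exact ⟨_, _, Shape.one e B⟩
    | mul x y _ _ hx hy =>
      obtain ⟨_, _, hx⟩ := hx
      obtain ⟨_, _, hy⟩ := hy
      exact ⟨_, _, hx.mul hy⟩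
    | inv x _ hx =>
      obtain ⟨_, _, hx⟩ := hx
      exact ⟨_, _, hx.inv⟩
  refine ⟨free_of_shape e B _ hsh, pd_of_shape e B _ hsh,
    cocompact_of_coords e _ g t₁ t₂ ?_ ?_ ?_ (fun x => by simp [hgc]) h1c h2c⟩
  all_goals exact Subgroup.subset_closure (by simp)
end
end
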